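/- Let N ≥ 5, 1 ≤ k ≤ N−2 and σ ∈ (0,2), and let w be a positive ground state for S_{N,σ}. Then the integrals ∫_{ℝ^N} |t|² |∇w|² dx, ∫_{ℝ^N} w² dx and ∫_{ℝ^N} |t|² |z|^{−σ} w^{2*_σ} dx are finite and S_{N,σ} ∫_{ℝ^N} |t|² |z|^{−σ} w^{2*_σ} dx = ∫_{ℝ^N} |t|² |∇w|² dx − k ∫_{ℝ^N} w² dx. -/

import Mathlib

open MeasureTheory Filter Metric Set Bornology
open scoped Manifold

noncomputable section

abbrev Euc (N : ℕ) := EuclideanSpace ℝ (Fin N)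

/-- Euclidean norm of the `z`-component (the last `N - k` coordinates) of `x ∈ ℝ^N`. -/
def zNorm (N k : ℕ) (x : Euc N) : ℝ :=
  Real.sqrt (∑ i : Fin N, if k ≤ (i : ℕ) then (x i) ^ 2 else 0)

/-- Euclidean norm of the `t`-component (the first `k` coordinates) of `x ∈ ℝ^N`. -/
def tNorm (N k : ℕ) (x : Euc N) : ℝ :=
  Real.sqrt (∑ i : Fin N, if (i : ℕ) < k then (x i) ^ 2 else 0)

/-- The critical Hardy–Sobolev exponent `2*_σ = 2(N-σ)/(N-2)`. -/
def twoStar (N : ℕ) (σ : ℝ) : ℝ := 2 * ((N : ℝ) - σ) / ((N : ℝ) - 2)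

/-- Dirichlet energy `∫ |∇v|²`. -/
def gradL2 (N : ℕ) (v : Euc N → ℝ) : ℝ := ∫ x, ‖fderiv ℝ v x‖ ^ 2

/-- Hardy–Sobolev integral `∫ |z|^{-σ} |v|^{2*_σ}`. -/
def hsInt (N k : ℕ) (σ : ℝ) (v : Euc N → ℝ) : ℝ :=
  ∫ x, zNorm N k x ^ (-σ) * |v x| ^ twoStar N σ

/-- Membership in `D^{1,2}(ℝ^N)`, the completion of `C_c^∞(ℝ^N)` for the norm
`v ↦ (∫ |∇v|²)^{1/2}`: `v` is a limit of smooth compactly supported functions, with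
gradients converging in `L²` (and, via the Sobolev embedding of the completion,
the functions converging in `L^{2N/(N-2)}`). -/
def MemD12 (N : ℕ) (v : Euc N → ℝ) : Prop :=
  ∃ φ : ℕ → Euc N → ℝ,
    (∀ n, ContDiff ℝ (⊤ : ℕ∞) (φ n) ∧ HasCompactSupport (φ n)) ∧
    Tendsto (fun n => eLpNorm (fun x => v x - φ n x)
      (ENNReal.ofReal (2 * (N : ℝ) / ((N : ℝ) - 2))) volume) atTop (nhds 0) ∧
    Tendsto (fun n => eLpNorm (fun x => fderiv ℝ v x - fderiv ℝ (φ n) x) 2 volume)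
      atTop (nhds 0)

/-- The best constant `S_{N,σ}` in the cylindrical Hardy–Sobolev inequality. -/
def Sconst (N k : ℕ) (σ : ℝ) : ℝ :=
  sInf {s : ℝ | ∃ v, MemD12 N v ∧ hsInt N k σ v = 1 ∧ s = gradL2 N v}

/-- A (positive) ground state for `S_{N,σ}`. -/
def GroundState (N k : ℕ) (σ : ℝ) (w : Euc N → ℝ) : Prop :=
  MemD12 N w ∧ (∀ x, 0 < w x) ∧ hsInt N k σ w = 1 ∧ gradL2 N w = Sconst N k σ

/-- Membership in `H¹₀(Ω)`: limit of smooth functions compactly supported in `Ω`,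
in the `H¹` norm. -/
def MemH10 (N : ℕ) (Ω : Set (Euc N)) (u : Euc N → ℝ) : Prop :=
  ∃ φ : ℕ → Euc N → ℝ,
    (∀ n, ContDiff ℝ (⊤ : ℕ∞) (φ n) ∧ HasCompactSupport (φ n) ∧ tsupport (φ n) ⊆ Ω) ∧
    Tendsto (fun n => eLpNorm (fun x => u x - φ n x) 2 volume) atTop (nhds 0) ∧
    Tendsto (fun n => eLpNorm (fun x => fderiv ℝ u x - fderiv ℝ (φ n) x) 2 volume)
      atTop (nhds 0)

/-- Coercivity of the operator `-Δ + h` on `H¹₀(Ω)`. -/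
def CoerciveOp (N : ℕ) (Ω : Set (Euc N)) (h : Euc N → ℝ) : Prop :=
  ∃ c > 0, ∀ u, MemH10 N Ω u →
    c * ∫ x in Ω, (‖fderiv ℝ u x‖ ^ 2 + u x ^ 2) ≤
      ∫ x in Ω, (‖fderiv ℝ u x‖ ^ 2 + h x * u x ^ 2)

/-- The Hardy–Sobolev quotient of `u` on `Ω` with singularity `Γ` and potential `h`. -/
def hsQuot (N : ℕ) (σ : ℝ) (Ω Γ : Set (Euc N)) (h : Euc N → ℝ) (u : Euc N → ℝ) : ℝ :=
  ((∫ x in Ω, ‖fderiv ℝ u x‖ ^ 2) + ∫ x in Ω, h x * u x ^ 2) /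
    (∫ x in Ω, infDist x Γ ^ (-σ) * |u x| ^ twoStar N σ) ^ (2 / twoStar N σ)

/-- The best constant `μ_{h,σ}(Ω,Γ)`. -/
def muHS (N : ℕ) (σ : ℝ) (Ω Γ : Set (Euc N)) (h : Euc N → ℝ) : ℝ :=
  sInf {m : ℝ | ∃ u, MemH10 N Ω u ∧ ¬ (u =ᵐ[volume.restrict Ω] (0 : Euc N → ℝ)) ∧
    m = hsQuot N σ Ω Γ h u}

/-- The pointwise Laplacian of `f : ℝ^N → ℝ`. -/
def lapl (N : ℕ) (f : Euc N → ℝ) (x : Euc N) : ℝ :=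
  ∑ i : Fin N, fderiv ℝ (fun y => fderiv ℝ f y (EuclideanSpace.single i 1)) x
    (EuclideanSpace.single i 1)

/-!
Write `μ` for the probability measure `|z|^{-σ} w^{2*_σ} dx`. Minimality of `w` among the functions
`(1 + ε η) w` gives the Euler–Lagrange equation `∫ ⟨∇w, ∇(η w)⟩ = S ∫ η dμ` for smooth bounded
weights `η`, and the identity follows formally by taking `η = |t|²`: the cross term
`2 ∫ w ⟨∇w, t⟩` equals `-k ∫ w²` by integration by parts.

This `η` is unbounded, so decay of `w` is needed first. Let `ψ = (1 + |x|²)^{1/2}`, damped at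
infinity. The equation tested with `ψ²` reads `∫ |∇(ψ w)|² = S ∫ ψ² dμ + ∫ |∇ψ|² w²`. Far out `μ`
has small mass, so Hölder and the Hardy–Sobolev inequality for `ψ w` absorb that part of the
first term; since `|∇ψ| ψ⁻¹` is at most the Hardy weight, Hardy's inequality absorbs the second term
as soon as its constant `2 / (N - 2)` is less than one, that is, `N ≥ 5`. The bounds do not depend
on the damping, which can then be removed.
-/

section

open Module
open scoped ContDiff ENNReal Gradient RealInnerProductSpace Topology

section SquareIntegrable

variable {α β F G : Type*} {mα : MeasurableSpace α} {mβ : MeasurableSpace β}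
  {μ : Measure α} {ν : Measure β} [NormedAddCommGroup F] [NormedAddCommGroup G]

lemma eLpNorm_two_eq_ofReal_sqrt {f : α → F} (hf : MemLp f 2 μ) :
    eLpNorm f 2 μ = ENNReal.ofReal √(∫ x, ‖f x‖ ^ 2 ∂μ) := by
  simp [hf.eLpNorm_eq_integral_rpow_norm (by simp) (by simp), Real.sqrt_eq_rpow]

lemma eLpNorm_two_le_ofReal_mul_iff {f : α → F} {g : β → G} (hf : MemLp f 2 μ)
    (hg : MemLp g 2 ν) {K : ℝ} (hK : 0 ≤ K) :
    eLpNorm f 2 μ ≤ ENNReal.ofReal K * eLpNorm g 2 ν ↔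
      ∫ x, ‖f x‖ ^ 2 ∂μ ≤ K ^ 2 * ∫ x, ‖g x‖ ^ 2 ∂ν := by
  rw [eLpNorm_two_eq_ofReal_sqrt hf, eLpNorm_two_eq_ofReal_sqrt hg, ← ENNReal.ofReal_mul hK,
    ENNReal.ofReal_le_ofReal_iff (by positivity),
    Real.sqrt_le_left (by positivity), mul_pow, Real.sq_sqrt (by positivity)]

variable [InnerProductSpace ℝ F]

lemma integrable_inner_of_memLp_two {f g : α → F} (hf : MemLp f 2 μ) (hg : MemLp g 2 μ) :
    Integrable (fun x ↦ ⟪f x, g x⟫) μ :=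
  (L2.integrable_inner (𝕜 := ℝ) hf.toLp hg.toLp).congr <| by
    filter_upwards [hf.coeFn_toLp, hg.coeFn_toLp] with x hfx hgx
    rw [hfx, hgx]

lemma two_mul_abs_integral_inner_le {f g : α → F} (hf : MemLp f 2 μ) (hg : MemLp g 2 μ) {c : ℝ}
    (hc : 0 < c) :
    2 * |∫ x, ⟪f x, g x⟫ ∂μ| ≤ c * ∫ x, ‖f x‖ ^ 2 ∂μ + c⁻¹ * ∫ x, ‖g x‖ ^ 2 ∂μ := by
  have hf2 := (hf.integrable_norm_pow two_ne_zero).const_mul c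
  have hg2 := (hg.integrable_norm_pow two_ne_zero).const_mul c⁻¹
  have young (x) : 2 * |⟪f x, g x⟫| ≤ c * ‖f x‖ ^ 2 + c⁻¹ * ‖g x‖ ^ 2 := by
    have hsq : c * ‖f x‖ ^ 2 + c⁻¹ * ‖g x‖ ^ 2 - 2 * (‖f x‖ * ‖g x‖)
        = c⁻¹ * (c * ‖f x‖ - ‖g x‖) ^ 2 := by field_simp; ring
    have hsq_nonneg : 0 ≤ c⁻¹ * (c * ‖f x‖ - ‖g x‖) ^ 2 := by positivity
    linarith [abs_real_inner_le_norm (f x) (g x)]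
  calc 2 * |∫ x, ⟪f x, g x⟫ ∂μ| ≤ ∫ x, 2 * |⟪f x, g x⟫| ∂μ := by
        rw [integral_const_mul]
        gcongr
        exact abs_integral_le_integral_abs
    _ ≤ ∫ x, (c * ‖f x‖ ^ 2 + c⁻¹ * ‖g x‖ ^ 2) ∂μ :=
        integral_mono ((integrable_inner_of_memLp_two hf hg).abs.const_mul 2) (hf2.add hg2) young
    _ = _ := by rw [integral_add hf2 hg2, integral_const_mul, integral_const_mul]

lemma tendsto_integral_inner {ι : Type*} {l : Filter ι} {f g : ι → α → F} {f' g' : α → F}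
    (hf : ∀ n, MemLp (f n) 2 μ) (hf' : MemLp f' 2 μ)
    (hg : ∀ n, MemLp (g n) 2 μ) (hg' : MemLp g' 2 μ)
    (hff' : Tendsto (fun n ↦ eLpNorm (f n - f') 2 μ) l (𝓝 0))
    (hgg' : Tendsto (fun n ↦ eLpNorm (g n - g') 2 μ) l (𝓝 0)) :
    Tendsto (fun n ↦ ∫ x, ⟪f n x, g n x⟫ ∂μ) l (𝓝 (∫ x, ⟪f' x, g' x⟫ ∂μ)) := by
  have inner_toLp {a b : α → F} (ha : MemLp a 2 μ) (hb : MemLp b 2 μ) :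
      ⟪ha.toLp, hb.toLp⟫ = ∫ x, ⟪a x, b x⟫ ∂μ := by
    refine (L2.inner_def (𝕜 := ℝ) _ _).trans (integral_congr_ae ?_)
    filter_upwards [ha.coeFn_toLp, hb.coeFn_toLp] with x hax hbx
    rw [hax, hbx]
  have hfL := (Lp.tendsto_Lp_iff_tendsto_eLpNorm'' f hf f' hf').2 hff'
  have hgL := (Lp.tendsto_Lp_iff_tendsto_eLpNorm'' g hg g' hg').2 hgg'
  simpa only [inner_toLp] using hfL.inner (𝕜 := ℝ) hgL

lemma integral_norm_add_smul_sq {f g : α → F} (hf : MemLp f 2 μ) (hg : MemLp g 2 μ) (c : ℝ) :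
    ∫ x, ‖f x + c • g x‖ ^ 2 ∂μ =
      ∫ x, ‖f x‖ ^ 2 ∂μ + 2 * c * ∫ x, ⟪f x, g x⟫ ∂μ + c ^ 2 * ∫ x, ‖g x‖ ^ 2 ∂μ := by
  have hfg := integrable_inner_of_memLp_two hf hg
  have expand (x) : ‖f x + c • g x‖ ^ 2 =
      ‖f x‖ ^ 2 + 2 * c * ⟪f x, g x⟫ + c ^ 2 * ‖g x‖ ^ 2 := by
    rw [norm_add_sq_real, real_inner_smul_right, norm_smul, mul_pow, Real.norm_eq_abs, sq_abs]
    ring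
  have hf2 := hf.integrable_norm_pow two_ne_zero
  have hg2 := (hg.integrable_norm_pow two_ne_zero).const_mul (c ^ 2)
  have hfgc := hfg.const_mul (2 * c)
  rw [← integral_const_mul, ← integral_const_mul, ← integral_add hf2 hfgc,
    ← integral_add (hf2.fun_add hfgc) hg2]
  exact integral_congr_ae (.of_forall expand)

lemma integrable_of_tendsto_of_integral_norm_le {f : ℕ → α → G} {g : α → G} {C : ℝ}
    (hf : ∀ n, Integrable (f n) μ) (hC : ∀ n, ∫ x, ‖f n x‖ ∂μ ≤ C)
    (hlim : ∀ᵐ x ∂μ, Tendsto (fun n ↦ f n x) atTop (𝓝 (g x))) : Integrable g μ := by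
  refine memLp_one_iff_integrable.1
    ⟨aestronglyMeasurable_of_tendsto_ae _ (fun n ↦ (hf n).1) hlim, ?_⟩
  have hle (n) : eLpNorm (f n) 1 μ ≤ ENNReal.ofReal C := by
    rw [eLpNorm_one_eq_lintegral_enorm, ← ofReal_integral_norm_eq_lintegral_enorm (hf n)]
    exact ENNReal.ofReal_le_ofReal (hC n)
  have hfatou := Lp.eLpNorm_lim_le_liminf_eLpNorm (p := 1) (fun n ↦ (hf n).1) _ hlim
  exact (hfatou.trans ((liminf_le_liminf (.of_forall hle)).trans_eq (liminf_const _))).trans_lt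
    ENNReal.ofReal_lt_top

end SquareIntegrable

section Gradient

variable {E : Type*} [NormedAddCommGroup E] [InnerProductSpace ℝ E] [CompleteSpace E]

lemma norm_gradient (f : E → ℝ) (x : E) : ‖∇ f x‖ = ‖fderiv ℝ f x‖ :=
  (InnerProductSpace.toDual ℝ E).symm.norm_map _

lemma continuous_gradient {f : E → ℝ} (hf : ContDiff ℝ 1 f) : Continuous (∇ f) :=
  (InnerProductSpace.toDual ℝ E).symm.continuous.comp (hf.continuous_fderiv one_ne_zero)

lemma hasGradientAt_mul {f g : E → ℝ} {f' g' x : E} (hf : HasGradientAt f f' x)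
    (hg : HasGradientAt g g' x) :
    HasGradientAt (fun y ↦ f y * g y) (f x • g' + g x • f') x := by
  refine hasGradientAt_iff_hasFDerivAt.2 ((hf.hasFDerivAt.mul hg.hasFDerivAt).congr_fderiv ?_)
  simp only [map_add, map_smulₛₗ, conj_trivial]

lemma hasGradientAt_comp_norm_sq {h : ℝ → ℝ} {h' : ℝ} {x : E} (hh : HasDerivAt h h' (‖x‖ ^ 2)) :
    HasGradientAt (fun y ↦ h (‖y‖ ^ 2)) ((2 * h') • x) x := by
  refine hasGradientAt_iff_hasFDerivAt.2
    ((hh.comp_hasFDerivAt x (hasStrictFDerivAt_norm_sq x).hasFDerivAt).congr_fderiv ?_)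
  ext y
  simp only [smul_apply, innerSL_apply_apply, InnerProductSpace.toDual_apply_apply,
    real_inner_smul_left, smul_eq_mul, nsmul_eq_mul, Nat.cast_ofNat]
  ring

end Gradient

section Divergence

variable {E : Type*} [NormedAddCommGroup E] [InnerProductSpace ℝ E]

/-- The divergence of a vector field, as the trace of its derivative. -/
def divergence (X : E → E) (x : E) : ℝ := LinearMap.trace ℝ E (fderiv ℝ X x)

lemma divergence_eq_sum {ι : Type*} [Fintype ι] (b : OrthonormalBasis ι ℝ E) (X : E → E) (x : E) :
    divergence X x = ∑ i, ⟪b i, fderiv ℝ X x (b i)⟫ :=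
  LinearMap.trace_eq_sum_inner _ b

variable [FiniteDimensional ℝ E]

lemma divergence_smul_apply {ρ : E → ℝ} {x : E} (hρ : DifferentiableAt ℝ ρ x) (T : E →L[ℝ] E) :
    divergence (fun y ↦ ρ y • T y) x = ρ x * LinearMap.trace ℝ E T + ⟪∇ ρ x, T x⟫ := by
  have hderiv := (hρ.hasFDerivAt.fun_smul T.hasFDerivAt).fderiv
  rw [divergence, hderiv, ContinuousLinearMap.toLinearMap_add,
    map_add, ContinuousLinearMap.toLinearMap_smul, map_smul, smul_eq_mul, inner_gradient_left]
  exact congrArg _ (LinearMap.trace_smulRight _ _)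

lemma continuous_divergence {X : E → E} (hX : ContDiff ℝ 1 X) : Continuous (divergence X) := by
  simp only [funext (divergence_eq_sum (stdOrthonormalBasis ℝ E) X)]
  have := hX.continuous_fderiv one_ne_zero
  fun_prop

variable [MeasurableSpace E] [BorelSpace E]

lemma integral_mul_divergence {f : E → ℝ} (hf : ContDiff ℝ 1 f) (hfc : HasCompactSupport f)
    {X : E → E} (hX : ContDiff ℝ 1 X) :
    ∫ x, f x * divergence X x = -∫ x, ⟪∇ f x, X x⟫ := by
  let b := stdOrthonormalBasis ℝ E
  have := hf.continuous_fderiv one_ne_zero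
  have := hX.continuous_fderiv one_ne_zero
  have hXc := hX.continuous
  have integrable_of_factor {h : E → ℝ} (hh : Continuous h) (hhc : HasCompactSupport h)
      {k : E → ℝ} (hk : Continuous k) : Integrable (fun x ↦ h x * k x) :=
    (hh.mul hk).integrable_of_hasCompactSupport hhc.mul_right
  have hfbc (i) : HasCompactSupport fun x ↦ fderiv ℝ f x (b i) := hfc.fderiv_apply ℝ (b i)
  have integral_coordinate (i) : ∫ x, f x * ⟪b i, fderiv ℝ X x (b i)⟫ =
      -∫ x, fderiv ℝ f x (b i) * ⟪b i, X x⟫ := by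
    have hderiv (x) : fderiv ℝ (fun y ↦ ⟪b i, X y⟫) x (b i) = ⟪b i, fderiv ℝ X x (b i)⟫ := by
      simp [fderiv_inner_apply ℝ (differentiableAt_const _)
        (hX.differentiable one_ne_zero).differentiableAt]
    simp only [← hderiv]
    refine integral_mul_fderiv_eq_neg_fderiv_mul_of_integrable
      (integrable_of_factor (by fun_prop) (hfbc i) (by fun_prop)) ?_
      (integrable_of_factor hf.continuous hfc (by fun_prop))
      (fun x _ ↦ hf.differentiable one_ne_zero x)
      (fun x _ ↦ (contDiff_const.inner ℝ hX).differentiable one_ne_zero x)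
    simp only [hderiv]
    exact integrable_of_factor hf.continuous hfc (by fun_prop)
  have hinner (x) : ⟪∇ f x, X x⟫ = ∑ i, fderiv ℝ f x (b i) * ⟪b i, X x⟫ := by
    simp only [← inner_gradient_left]
    exact (b.sum_inner_mul_inner _ _).symm
  simp only [hinner, divergence_eq_sum b, Finset.mul_sum]
  rw [integral_finsetSum, integral_finsetSum, ← Finset.sum_neg_distrib]
  · exact Finset.sum_congr rfl fun i _ ↦ integral_coordinate i
  · exact fun i _ ↦ integrable_of_factor (by fun_prop) (hfbc i) (by fun_prop)
  · exact fun i _ ↦ integrable_of_factor hf.continuous hfc (by fun_prop)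

lemma integral_sq_mul_divergence {φ : E → ℝ} (hφ : ContDiff ℝ 1 φ) (hφc : HasCompactSupport φ)
    {X : E → E} (hX : ContDiff ℝ 1 X) :
    ∫ x, φ x ^ 2 * divergence X x = -(2 * ∫ x, ⟪∇ φ x, φ x • X x⟫) := by
  have hgrad (x) : ∇ (fun y ↦ φ y * φ y) x = (2 * φ x) • ∇ φ x := by
    have hφx := ((hφ.differentiable one_ne_zero) x).hasGradientAt
    rw [(hasGradientAt_mul hφx hφx).gradient, two_mul, add_smul]
  simp only [pow_two]
  rw [integral_mul_divergence (hφ.mul hφ) hφc.mul_left hX, ← integral_const_mul]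
  simp only [hgrad, real_inner_smul_left, real_inner_smul_right, mul_assoc]

end Divergence

section HardyWeight

variable {E : Type*} [NormedAddCommGroup E]

/-- The inhomogeneous Hardy weight `(1 + |x|²)^{-1/2}`, the inverse of the Japanese bracket. -/
def hardyWeight (x : E) : ℝ := (√(1 + ‖x‖ ^ 2))⁻¹

lemma hardyWeight_pos (x : E) : 0 < hardyWeight x := by
  unfold hardyWeight; positivity

lemma norm_hardyWeight (x : E) : ‖hardyWeight x‖ = hardyWeight x :=
  Real.norm_of_nonneg (hardyWeight_pos x).le

lemma hardyWeight_sq (x : E) : hardyWeight x ^ 2 = (1 + ‖x‖ ^ 2)⁻¹ := by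
  rw [hardyWeight, inv_pow, Real.sq_sqrt (by positivity)]

lemma hardyWeight_le_one (x : E) : hardyWeight x ≤ 1 :=
  inv_le_one_of_one_le₀ (Real.one_le_sqrt.2 (by nlinarith [sq_nonneg ‖x‖]))

lemma norm_mul_hardyWeight_le_one (x : E) : ‖x‖ * hardyWeight x ≤ 1 := by
  rw [hardyWeight, ← div_eq_mul_inv, div_le_one (by positivity)]
  exact Real.le_sqrt_of_sq_le (by linarith)

lemma continuous_hardyWeight : Continuous (hardyWeight : E → ℝ) := by
  unfold hardyWeight
  exact Continuous.inv₀ (by fun_prop) fun x ↦ by positivity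

end HardyWeight

section Hardy

variable {E : Type*} [NormedAddCommGroup E] [InnerProductSpace ℝ E]

lemma hasGradientAt_hardyWeight_sq [CompleteSpace E] (x : E) :
    HasGradientAt (fun y : E ↦ (1 + ‖y‖ ^ 2)⁻¹) (-(2 * hardyWeight x ^ 4) • x) x := by
  have hderiv : HasDerivAt (fun s : ℝ ↦ (1 + s)⁻¹) (-1 / (1 + ‖x‖ ^ 2) ^ 2) (‖x‖ ^ 2) :=
    ((hasDerivAt_id _).const_add 1).inv (by positivity)
  convert hasGradientAt_comp_norm_sq hderiv using 2
  rw [show hardyWeight x ^ 4 = (hardyWeight x ^ 2) ^ 2 by ring, hardyWeight_sq, inv_pow]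
  ring

/-- The vector field `x / (1 + |x|²)`, whose divergence dominates the square of the Hardy
weight. -/
def hardyField (x : E) : E := (1 + ‖x‖ ^ 2)⁻¹ • x

lemma contDiff_hardyField {n : ℕ∞} : ContDiff ℝ n (hardyField : E → E) :=
  ((contDiff_const.add (contDiff_norm_sq ℝ)).inv fun y ↦ by positivity).smul contDiff_id

lemma norm_hardyField_le (x : E) : ‖hardyField x‖ ≤ hardyWeight x := by
  rw [hardyField, ← hardyWeight_sq, norm_smul, Real.norm_of_nonneg (by positivity)]
  nlinarith [norm_mul_hardyWeight_le_one x, hardyWeight_pos x]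

variable (E) in
/-- The constant `2 / (dim E - 2)` of Hardy's inequality. -/
def hardyConst : ℝ := 2 / (finrank ℝ E - 2)

lemma hardyConst_pos (hE : 2 < finrank ℝ E) : 0 < hardyConst E :=
  div_pos two_pos (sub_pos.2 (by exact_mod_cast hE))

lemma hardyConst_le (hE : 5 ≤ finrank ℝ E) : hardyConst E ≤ 2 / 3 := by
  have : (5 : ℝ) ≤ finrank ℝ E := mod_cast hE
  exact div_le_div_of_nonneg_left two_pos.le three_pos (by linarith)

variable [FiniteDimensional ℝ E]

lemma mul_hardyWeight_sq_le_divergence_hardyField (x : E) :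
    (finrank ℝ E - 2) * hardyWeight x ^ 2 ≤ divergence hardyField x := by
  have hgrad := hasGradientAt_hardyWeight_sq x
  have hdiv := divergence_smul_apply hgrad.differentiableAt (ContinuousLinearMap.id ℝ E)
  have htrace : LinearMap.trace ℝ E (ContinuousLinearMap.id ℝ E) = finrank ℝ E :=
    LinearMap.trace_id ℝ E
  rw [hgrad.gradient, htrace, ContinuousLinearMap.id_apply, ← hardyWeight_sq,
    real_inner_smul_left, real_inner_self_eq_norm_sq] at hdiv
  refine le_of_le_of_eq ?_ hdiv.symm
  have hle : (‖x‖ * hardyWeight x) ^ 2 ≤ 1 :=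
    pow_le_one₀ (mul_nonneg (norm_nonneg x) (hardyWeight_pos x).le) (norm_mul_hardyWeight_le_one x)
  nlinarith [sq_nonneg (hardyWeight x)]

variable [MeasurableSpace E] [BorelSpace E]

lemma memLp_gradient {φ : E → ℝ} (hφ : ContDiff ℝ 1 φ) (hφc : HasCompactSupport φ) {p : ℝ≥0∞} :
    MemLp (∇ φ) p :=
  (continuous_gradient hφ).memLp_of_hasCompactSupport
    ((hφc.fderiv ℝ).comp_left (map_zero (InnerProductSpace.toDual ℝ E).symm))

lemma memLp_smul_of_hasCompactSupport {F : Type*} [NormedAddCommGroup F] [NormedSpace ℝ F]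
    {φ : E → ℝ} (hφ : Continuous φ) (hφc : HasCompactSupport φ) {X : E → F} (hX : Continuous X)
    {p : ℝ≥0∞} : MemLp (fun x ↦ φ x • X x) p :=
  (hφ.smul hX).memLp_of_hasCompactSupport hφc.smul_right

theorem eLpNorm_smul_hardyWeight_le (hE : 2 < finrank ℝ E) {φ : E → ℝ} (hφ : ContDiff ℝ 1 φ)
    (hφc : HasCompactSupport φ) :
    eLpNorm (fun x ↦ φ x • hardyWeight x) 2 ≤ ENNReal.ofReal (hardyConst E) * eLpNorm (∇ φ) 2 := by
  have hX : ContDiff ℝ 1 (hardyField : E → E) := contDiff_hardyField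
  have hφq := memLp_smul_of_hasCompactSupport (p := 2) hφ.continuous hφc continuous_hardyWeight
  have hφX := memLp_smul_of_hasCompactSupport (p := 2) hφ.continuous hφc hX.continuous
  have hgrad := memLp_gradient hφ hφc (p := 2)
  have hc := hardyConst_pos hE
  rw [eLpNorm_two_le_ofReal_mul_iff hφq hgrad hc.le]
  have hsq := hφq.integrable_norm_pow two_ne_zero
  have lower : 2 * (hardyConst E)⁻¹ * ∫ x, ‖φ x • hardyWeight x‖ ^ 2 ≤
      -(2 * ∫ x, ⟪∇ φ x, φ x • hardyField x⟫) := by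
    rw [← integral_sq_mul_divergence hφ hφc hX, ← integral_const_mul]
    refine integral_mono (hsq.const_mul _) ?_ fun x ↦ ?_
    · exact ((hφ.continuous.pow 2).mul (continuous_divergence hX))
        |>.integrable_of_hasCompactSupport (hφc.comp_left (zero_pow two_ne_zero)).mul_right
    · have hdiv := mul_hardyWeight_sq_le_divergence_hardyField x
      simp only [norm_smul, mul_pow, Real.norm_eq_abs, sq_abs, hardyConst, inv_div]
      nlinarith [sq_nonneg (φ x)]
  have field_le : ∫ x, ‖φ x • hardyField x‖ ^ 2 ≤ ∫ x, ‖φ x • hardyWeight x‖ ^ 2 := by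
    refine integral_mono (hφX.integrable_norm_pow two_ne_zero) hsq fun x ↦ ?_
    simp only [norm_smul, norm_hardyWeight]
    gcongr
    exact norm_hardyField_le x
  have upper := two_mul_abs_integral_inner_le hgrad hφX hc
  have field_le' := mul_le_mul_of_nonneg_left field_le (inv_nonneg.2 hc.le)
  have absorbed : (hardyConst E)⁻¹ * ∫ x, ‖φ x • hardyWeight x‖ ^ 2 ≤
      hardyConst E * ∫ x, ‖∇ φ x‖ ^ 2 := by
    linarith [neg_abs_le (∫ x, ⟪∇ φ x, φ x • hardyField x⟫)]
  rwa [inv_mul_le_iff₀ hc, ← mul_assoc, ← pow_two] at absorbed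

end Hardy

section DirichletGradient

variable {E : Type*} [NormedAddCommGroup E] [InnerProductSpace ℝ E]

/-- Test functions: smooth functions with compact support. -/
structure IsTestFunction (φ : E → ℝ) : Prop where
  contDiff : ContDiff ℝ ∞ φ
  hasCompactSupport : HasCompactSupport φ

lemma IsTestFunction.contDiff_one {φ : E → ℝ} (hφ : IsTestFunction φ) : ContDiff ℝ 1 φ :=
  hφ.contDiff.of_le (by simp)

lemma IsTestFunction.sub {φ ψ : E → ℝ} (hφ : IsTestFunction φ) (hψ : IsTestFunction ψ) :
    IsTestFunction (φ - ψ) :=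
  ⟨hφ.contDiff.sub hψ.contDiff, hφ.hasCompactSupport.sub hψ.hasCompactSupport⟩

lemma IsTestFunction.hasGradientAt [CompleteSpace E] {φ : E → ℝ} (hφ : IsTestFunction φ) (x : E) :
    HasGradientAt φ (∇ φ x) x :=
  (hφ.contDiff_one.differentiable one_ne_zero x).hasGradientAt

lemma IsTestFunction.gradient_sub [CompleteSpace E] {φ ψ : E → ℝ} (hφ : IsTestFunction φ)
    (hψ : IsTestFunction ψ) : ∇ (φ - ψ) = ∇ φ - ∇ ψ :=
  funext fun x ↦ (((hφ.hasGradientAt x).hasFDerivAt.sub (hψ.hasGradientAt x).hasFDerivAt)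
    |>.congr_fderiv (map_sub _ _ _).symm |> hasGradientAt_iff_hasFDerivAt.2).gradient

variable [FiniteDimensional ℝ E] [MeasurableSpace E] [BorelSpace E]

/-- `HasDirichletGradient u g` says that `u` belongs to the homogeneous Sobolev space `D^{1,2}` and
has weak gradient `g`: test functions converge to `u` almost everywhere, with gradients converging
to `g` in `L²`. -/
structure HasDirichletGradient (u : E → ℝ) (g : E → E) : Prop where
  memLp : MemLp g 2
  exists_seq : ∃ φ : ℕ → E → ℝ, (∀ n, IsTestFunction (φ n)) ∧
    (∀ᵐ x, Tendsto (fun n ↦ φ n x) atTop (𝓝 (u x))) ∧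
    Tendsto (fun n ↦ eLpNorm (∇ (φ n) - g) 2) atTop (𝓝 0)

lemma IsTestFunction.memLp_gradient {φ : E → ℝ} (hφ : IsTestFunction φ) {p : ℝ≥0∞} :
    MemLp (∇ φ) p :=
  _root_.memLp_gradient hφ.contDiff_one hφ.hasCompactSupport

lemma IsTestFunction.hasDirichletGradient {φ : E → ℝ} (hφ : IsTestFunction φ) :
    HasDirichletGradient φ (∇ φ) :=
  ⟨hφ.memLp_gradient, fun _ ↦ φ, fun _ ↦ hφ, .of_forall fun _ ↦ tendsto_const_nhds, by simp⟩

namespace HasDirichletGradient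

variable {u v : E → ℝ} {g h : E → E}

lemma aestronglyMeasurable (hu : HasDirichletGradient u g) : AEStronglyMeasurable u := by
  obtain ⟨φ, hφ, hlim, -⟩ := hu.exists_seq
  exact aestronglyMeasurable_of_tendsto_ae _
    (fun n ↦ (hφ n).contDiff.continuous.aestronglyMeasurable) hlim

lemma sub (hu : HasDirichletGradient u g) (hv : HasDirichletGradient v h) :
    HasDirichletGradient (u - v) (g - h) := by
  obtain ⟨φ, hφ, hφu, hφg⟩ := hu.exists_seq
  obtain ⟨ψ, hψ, hψv, hψh⟩ := hv.exists_seq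
  refine ⟨hu.memLp.sub hv.memLp, fun n ↦ φ n - ψ n, fun n ↦ (hφ n).sub (hψ n), ?_, ?_⟩
  · filter_upwards [hφu, hψv] with x hux hvx using hux.sub hvx
  · refine tendsto_of_tendsto_of_tendsto_of_le_of_le tendsto_const_nhds
      (by simpa using hφg.add hψh) (fun _ ↦ zero_le) fun n ↦ ?_
    rw [(hφ n).gradient_sub (hψ n), sub_sub_sub_comm]
    exact eLpNorm_sub_le ((hφ n).memLp_gradient.sub hu.memLp).1
      ((hψ n).memLp_gradient.sub hv.memLp).1 one_le_two

section Extension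

variable {F : Type*} [NormedAddCommGroup F] [NormedSpace ℝ F] {X : E → F}

lemma eLpNorm_smul_le_of_forall_isTestFunction (hu : HasDirichletGradient u g)
    (hX : AEStronglyMeasurable X) {p K : ℝ≥0∞} (hK : K ≠ ⊤)
    (hbound : ∀ φ : E → ℝ, IsTestFunction φ →
      eLpNorm (fun x ↦ φ x • X x) p ≤ K * eLpNorm (∇ φ) 2) :
    eLpNorm (fun x ↦ u x • X x) p ≤ K * eLpNorm g 2 := by
  obtain ⟨φ, hφ, hφu, hφg⟩ := hu.exists_seq
  have hlim : Tendsto (fun n ↦ K * (eLpNorm (∇ (φ n) - g) 2 + eLpNorm g 2)) atTop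
      (𝓝 (K * eLpNorm g 2)) := by
    have hsum := hφg.add_const (eLpNorm g 2)
    rw [zero_add] at hsum
    exact ENNReal.Tendsto.const_mul hsum (.inr hK)
  have hle (n) : eLpNorm (fun x ↦ φ n x • X x) p ≤
      K * (eLpNorm (∇ (φ n) - g) 2 + eLpNorm g 2) := by
    refine (hbound _ (hφ n)).trans ?_
    gcongr
    simpa using eLpNorm_add_le ((hφ n).memLp_gradient.sub hu.memLp).1 hu.memLp.1 one_le_two
  have hfatou : eLpNorm (fun x ↦ u x • X x) p ≤
      liminf (fun n ↦ eLpNorm (fun x ↦ φ n x • X x) p) atTop := by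
    refine Lp.eLpNorm_lim_le_liminf_eLpNorm
      (fun n ↦ (hφ n).contDiff.continuous.aestronglyMeasurable.smul hX) _ ?_
    filter_upwards [hφu] with x hx using hx.smul_const _
  exact hfatou.trans ((liminf_le_liminf (.of_forall hle)).trans_eq hlim.liminf_eq)

lemma eLpNorm_smul_le (hE : 2 < finrank ℝ E) (hu : HasDirichletGradient u g) {C : ℝ}
    (hX : ∀ x, ‖X x‖ ≤ C * hardyWeight x) :
    eLpNorm (fun x ↦ u x • X x) 2 ≤
      ENNReal.ofReal C * (ENNReal.ofReal (hardyConst E) * eLpNorm g 2) := by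
  refine (eLpNorm_le_mul_eLpNorm_of_ae_le_mul (c := C) (g := fun x ↦ u x • hardyWeight x)
    (.of_forall fun x ↦ ?_) 2).trans ?_
  · rw [norm_smul, norm_smul, norm_hardyWeight, mul_left_comm]
    gcongr
    exact hX x
  · gcongr
    exact hu.eLpNorm_smul_le_of_forall_isTestFunction
      continuous_hardyWeight.aestronglyMeasurable ENNReal.ofReal_ne_top
      fun φ hφ ↦ eLpNorm_smul_hardyWeight_le hE hφ.contDiff_one hφ.hasCompactSupport

lemma memLp_smul (hE : 2 < finrank ℝ E) (hu : HasDirichletGradient u g) {C : ℝ}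
    (hXm : AEStronglyMeasurable X) (hX : ∀ x, ‖X x‖ ≤ C * hardyWeight x) :
    MemLp (fun x ↦ u x • X x) 2 :=
  ⟨hu.aestronglyMeasurable.smul hXm, (hu.eLpNorm_smul_le hE hX).trans_lt <|
    ENNReal.mul_lt_top ENNReal.ofReal_lt_top <|
      ENNReal.mul_lt_top ENNReal.ofReal_lt_top hu.memLp.2⟩

lemma tendsto_eLpNorm_smul_sub (hE : 2 < finrank ℝ E) (hu : HasDirichletGradient u g)
    {φ : ℕ → E → ℝ} (hφ : ∀ n, IsTestFunction (φ n))
    (hφg : Tendsto (fun n ↦ eLpNorm (∇ (φ n) - g) 2) atTop (𝓝 0)) {C : ℝ}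
    (hX : ∀ x, ‖X x‖ ≤ C * hardyWeight x) :
    Tendsto (fun n ↦ eLpNorm ((fun x ↦ φ n x • X x) - fun x ↦ u x • X x) 2) atTop (𝓝 0) := by
  have hlim : Tendsto (fun n ↦ ENNReal.ofReal C *
      (ENNReal.ofReal (hardyConst E) * eLpNorm (∇ (φ n) - g) 2)) atTop (𝓝 0) := by
    simpa only [mul_zero] using ENNReal.Tendsto.const_mul
      (ENNReal.Tendsto.const_mul hφg (.inr ENNReal.ofReal_ne_top)) (.inr ENNReal.ofReal_ne_top)
  refine tendsto_of_tendsto_of_tendsto_of_le_of_le tendsto_const_nhds hlim (fun _ ↦ zero_le)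
    fun n ↦ le_of_eq_of_le ?_ (((hφ n).hasDirichletGradient.sub hu).eLpNorm_smul_le hE hX)
  congr 1
  ext x
  exact (sub_smul _ _ _).symm

end Extension

theorem integral_sq_mul_divergence (hE : 2 < finrank ℝ E) (hu : HasDirichletGradient u g)
    {X : E → E} (hX : ContDiff ℝ 1 X) {C : ℝ} (hXle : ∀ x, ‖X x‖ ≤ C * hardyWeight x)
    (hdiv : ∀ x, |divergence X x| ≤ C * hardyWeight x ^ 2) :
    ∫ x, u x ^ 2 * divergence X x = -(2 * ∫ x, ⟪g x, u x • X x⟫) := by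
  obtain ⟨φ, hφ, -, hφg⟩ := hu.exists_seq
  let d (x : E) : ℝ := (hardyWeight x)⁻¹ * divergence X x
  have hd (x) : ‖d x‖ ≤ C * hardyWeight x := by
    rw [Real.norm_eq_abs, abs_mul, abs_of_pos (inv_pos.2 (hardyWeight_pos x)),
      inv_mul_le_iff₀ (hardyWeight_pos x)]
    linarith [hdiv x]
  have hq (x : E) : ‖hardyWeight x‖ ≤ 1 * hardyWeight x := by rw [norm_hardyWeight, one_mul]
  have hdm : AEStronglyMeasurable d :=
    ((continuous_hardyWeight.inv₀ fun x ↦ (hardyWeight_pos x).ne').mul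
      (continuous_divergence hX)).aestronglyMeasurable
  have hqm := (continuous_hardyWeight (E := E)).aestronglyMeasurable (μ := volume)
  have hXm := hX.continuous.aestronglyMeasurable (μ := volume)
  have split (v : E → ℝ) (x) : v x ^ 2 * divergence X x = ⟪v x • hardyWeight x, v x • d x⟫ := by
    have := (hardyWeight_pos x).ne'
    simp only [d, smul_eq_mul, RCLike.inner_apply, conj_trivial]
    field_simp
  have hφu (n) := (hφ n).hasDirichletGradient
  have lim_left := tendsto_integral_inner
    (fun n ↦ (hφu n).memLp_smul hE hqm hq) (hu.memLp_smul hE hqm hq)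
    (fun n ↦ (hφu n).memLp_smul hE hdm hd) (hu.memLp_smul hE hdm hd)
    (hu.tendsto_eLpNorm_smul_sub hE hφ hφg hq) (hu.tendsto_eLpNorm_smul_sub hE hφ hφg hd)
  have lim_right := tendsto_integral_inner (fun n ↦ (hφ n).memLp_gradient) hu.memLp
    (fun n ↦ (hφu n).memLp_smul hE hXm hXle) (hu.memLp_smul hE hXm hXle) hφg
    (hu.tendsto_eLpNorm_smul_sub hE hφ hφg hXle)
  simp only [← split] at lim_left
  refine tendsto_nhds_unique lim_left ((lim_right.const_mul 2).neg.congr fun n ↦ ?_)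
  exact (_root_.integral_sq_mul_divergence (hφ n).contDiff_one (hφ n).hasCompactSupport hX).symm

lemma integrable_sq_mul_hardyWeight_sq (hE : 2 < finrank ℝ E) (hu : HasDirichletGradient u g) :
    Integrable (fun x ↦ u x ^ 2 * hardyWeight x ^ 2) := by
  have hq (x : E) : ‖hardyWeight x‖ ≤ 1 * hardyWeight x := by rw [norm_hardyWeight, one_mul]
  have huq := hu.memLp_smul hE continuous_hardyWeight.aestronglyMeasurable hq
  exact huq.integrable_sq.congr (.of_forall fun x ↦ mul_pow _ _ _)

theorem integral_sq_mul_hardyWeight_sq_le (hE : 2 < finrank ℝ E)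
    (hu : HasDirichletGradient u g) :
    ∫ x, u x ^ 2 * hardyWeight x ^ 2 ≤ hardyConst E ^ 2 * ∫ x, ‖g x‖ ^ 2 := by
  have hq (x : E) : ‖hardyWeight x‖ ≤ 1 * hardyWeight x := by rw [norm_hardyWeight, one_mul]
  have huq := hu.memLp_smul hE continuous_hardyWeight.aestronglyMeasurable hq
  have hardy := hu.eLpNorm_smul_le hE hq
  rw [ENNReal.ofReal_one, one_mul,
    eLpNorm_two_le_ofReal_mul_iff huq hu.memLp (hardyConst_pos hE).le] at hardy
  simpa only [smul_eq_mul, norm_mul, mul_pow, Real.norm_eq_abs, sq_abs] using hardy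

end HasDirichletGradient
end DirichletGradient

section Multiplier

variable {E : Type*} [NormedAddCommGroup E] [InnerProductSpace ℝ E]

/-- Smooth functions acting by multiplication on `D^{1,2}`: they are bounded, and their gradient is
bounded by a multiple of the Hardy weight. -/
structure IsDirichletMultiplier [CompleteSpace E] (η : E → ℝ) : Prop where
  contDiff : ContDiff ℝ ∞ η
  bounded : ∃ C, ∀ x, ‖η x‖ ≤ C
  gradient_le : ∃ C, ∀ x, ‖∇ η x‖ ≤ C * hardyWeight x

namespace IsDirichletMultiplier

variable [CompleteSpace E] {η ζ : E → ℝ}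

lemma contDiff_one (hη : IsDirichletMultiplier η) : ContDiff ℝ 1 η :=
  hη.contDiff.of_le (by simp)

lemma hasGradientAt (hη : IsDirichletMultiplier η) (x : E) : HasGradientAt η (∇ η x) x :=
  (hη.contDiff_one.differentiable one_ne_zero x).hasGradientAt

lemma gradient_mul (hη : IsDirichletMultiplier η) (hζ : IsDirichletMultiplier ζ) :
    ∇ (η * ζ) = η • ∇ ζ + ζ • ∇ η :=
  funext fun x ↦ (hasGradientAt_mul (hη.hasGradientAt x) (hζ.hasGradientAt x)).gradient

lemma gradient_const_add_const_mul (hη : IsDirichletMultiplier η) (a b : ℝ) (x : E) :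
    ∇ (fun y ↦ a + b * η y) x = b • ∇ η x := by
  refine HasGradientAt.gradient (hasGradientAt_iff_hasFDerivAt.2 ?_)
  exact (((hη.hasGradientAt x).hasFDerivAt.const_mul b).const_add a).congr_fderiv
    (map_smul (InnerProductSpace.toDual ℝ E).toLinearEquiv b _).symm

lemma const_add_const_mul (hη : IsDirichletMultiplier η) (a b : ℝ) :
    IsDirichletMultiplier fun x ↦ a + b * η x := by
  obtain ⟨C, hC⟩ := hη.bounded
  obtain ⟨D, hD⟩ := hη.gradient_le
  refine ⟨contDiff_const.add (contDiff_const.mul hη.contDiff), ⟨‖a‖ + ‖b‖ * C, fun x ↦ ?_⟩,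
    ⟨‖b‖ * D, fun x ↦ ?_⟩⟩
  · refine (norm_add_le _ _).trans ?_
    rw [norm_mul]
    gcongr
    exact hC x
  · rw [hη.gradient_const_add_const_mul, norm_smul, mul_assoc]
    gcongr
    exact hD x

lemma mul (hη : IsDirichletMultiplier η) (hζ : IsDirichletMultiplier ζ) :
    IsDirichletMultiplier (η * ζ) := by
  obtain ⟨C, hC⟩ := hη.bounded
  obtain ⟨D, hD⟩ := hζ.bounded
  obtain ⟨C', hC'⟩ := hη.gradient_le
  obtain ⟨D', hD'⟩ := hζ.gradient_le
  have hC0 : 0 ≤ C := (norm_nonneg _).trans (hC 0)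
  have hD0 : 0 ≤ D := (norm_nonneg _).trans (hD 0)
  refine ⟨hη.contDiff.mul hζ.contDiff, ⟨C * D, fun x ↦ ?_⟩, ⟨C * D' + D * C', fun x ↦ ?_⟩⟩
  · rw [Pi.mul_apply, norm_mul]
    gcongr
    exacts [hC x, hD x]
  · rw [hη.gradient_mul hζ]
    refine (norm_add_le _ _).trans ?_
    rw [Pi.smul_apply', Pi.smul_apply', norm_smul, norm_smul, add_mul, mul_assoc, mul_assoc]
    gcongr
    exacts [hC x, hD' x, hD x, hC' x]

end IsDirichletMultiplier

/-- The gradient `η ∇u + u ∇η` of the product `η u`, given `u` and its weak gradient `g`. -/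
def leibnizGradient [CompleteSpace E] (u : E → ℝ) (g : E → E) (η : E → ℝ) (x : E) : E :=
  η x • g x + u x • ∇ η x

variable [FiniteDimensional ℝ E] [MeasurableSpace E] [BorelSpace E] {u η : E → ℝ} {g : E → E}

lemma HasDirichletGradient.memLp_smul_gradient (hE : 2 < finrank ℝ E)
    (hu : HasDirichletGradient u g) (hη : IsDirichletMultiplier η) :
    MemLp (fun x ↦ u x • ∇ η x) 2 :=
  let ⟨_, hC⟩ := hη.gradient_le
  hu.memLp_smul hE (continuous_gradient hη.contDiff_one).aestronglyMeasurable hC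

lemma IsDirichletMultiplier.memLp_smul {F : Type*} [NormedAddCommGroup F] [NormedSpace ℝ F]
    {f : E → F} {p : ℝ≥0∞} {μ : Measure E} (hη : IsDirichletMultiplier η) (hf : MemLp f p μ) :
    MemLp (η • f) p μ := by
  obtain ⟨C, hC⟩ := hη.bounded
  refine hf.of_le_mul (c := C) (hη.contDiff.continuous.aestronglyMeasurable.smul hf.1)
    (.of_forall fun x ↦ ?_)
  rw [Pi.smul_apply', norm_smul]
  gcongr
  exact hC x

theorem HasDirichletGradient.mul (hE : 2 < finrank ℝ E) (hu : HasDirichletGradient u g)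
    (hη : IsDirichletMultiplier η) : HasDirichletGradient (η * u) (leibnizGradient u g η) := by
  obtain ⟨φ, hφ, hφu, hφg⟩ := hu.exists_seq
  obtain ⟨C, hC⟩ := hη.bounded
  obtain ⟨D, hD⟩ := hη.gradient_le
  refine ⟨(hη.memLp_smul hu.memLp).add (hu.memLp_smul_gradient hE hη), fun n ↦ η * φ n,
    fun n ↦ ⟨hη.contDiff.mul (hφ n).contDiff, (hφ n).hasCompactSupport.mul_left⟩, ?_, ?_⟩
  · filter_upwards [hφu] with x hx using hx.const_mul _
  have gradient_sub (n) : ∇ (η * φ n) - leibnizGradient u g η =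
      η • (∇ (φ n) - g) + (φ n • ∇ η - u • ∇ η) := by
    have hgrad : ∇ (η * φ n) = η • ∇ (φ n) + φ n • ∇ η :=
      funext fun x ↦ (hasGradientAt_mul (hη.hasGradientAt x) ((hφ n).hasGradientAt x)).gradient
    rw [hgrad]
    ext1 x
    simp only [leibnizGradient, Pi.sub_apply, Pi.add_apply, Pi.smul_apply']
    module
  have hdiff (n) := (hφ n).memLp_gradient.sub hu.memLp
  have hle (n) : eLpNorm (η • (∇ (φ n) - g)) 2 ≤
      ENNReal.ofReal C * eLpNorm (∇ (φ n) - g) 2 := by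
    refine eLpNorm_le_mul_eLpNorm_of_ae_le_mul (.of_forall fun x ↦ ?_) 2
    rw [Pi.smul_apply', norm_smul]
    gcongr
    exact hC x
  have hlim := (ENNReal.Tendsto.const_mul hφg (.inr (ENNReal.ofReal_ne_top (r := C)))).add
    (hu.tendsto_eLpNorm_smul_sub hE hφ hφg hD)
  rw [mul_zero, add_zero] at hlim
  refine tendsto_of_tendsto_of_tendsto_of_le_of_le tendsto_const_nhds hlim (fun _ ↦ zero_le)
    fun n ↦ ?_
  rw [gradient_sub]
  refine (eLpNorm_add_le (hη.memLp_smul (hdiff n)).1 ?_ one_le_two).trans ?_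
  · exact (((hφ n).hasDirichletGradient.memLp_smul_gradient hE hη).sub
      (hu.memLp_smul_gradient hE hη)).1
  · gcongr
    · exact hle n
    · exact le_rfl

end Multiplier

section Damping

variable {E : Type*} [NormedAddCommGroup E] {ε : ℝ}

/-- The damping factor `1 / (1 + ε (1 + |x|²))`, which makes weights of quadratic growth bounded and
tends to `1` as `ε → 0`. -/
def damping (ε : ℝ) (x : E) : ℝ := (1 + ε * (1 + ‖x‖ ^ 2))⁻¹

lemma damping_pos (hε : 0 < ε) (x : E) : 0 < damping ε x := by
  unfold damping; positivity

lemma damping_le_one (hε : 0 < ε) (x : E) : damping ε x ≤ 1 :=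
  inv_le_one_of_one_le₀ (le_add_of_nonneg_right (by positivity))

lemma mul_damping_le_one (hε : 0 < ε) (x : E) : ε * (1 + ‖x‖ ^ 2) * damping ε x ≤ 1 := by
  rw [damping, ← div_eq_mul_inv, div_le_one (by positivity)]
  linarith

lemma damping_le_inv_mul_hardyWeight_sq (hε : 0 < ε) (x : E) :
    damping ε x ≤ ε⁻¹ * hardyWeight x ^ 2 := by
  rw [damping, hardyWeight_sq, ← mul_inv]
  exact inv_anti₀ (by positivity) (by linarith)

lemma damping_mul_norm_le (hε : 0 < ε) (x : E) : damping ε x * ‖x‖ ≤ ε⁻¹ * hardyWeight x :=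
  calc damping ε x * ‖x‖ ≤ ε⁻¹ * hardyWeight x ^ 2 * ‖x‖ := by
        gcongr
        exact damping_le_inv_mul_hardyWeight_sq hε x
    _ = ε⁻¹ * hardyWeight x * (‖x‖ * hardyWeight x) := by ring
    _ ≤ ε⁻¹ * hardyWeight x :=
        mul_le_of_le_one_right (mul_nonneg (inv_nonneg.2 hε.le) (hardyWeight_pos x).le)
          (norm_mul_hardyWeight_le_one x)

lemma tendsto_damping (x : E) : Tendsto (fun ε ↦ damping ε x) (𝓝[>] 0) (𝓝 1) := by
  have hcont : ContinuousAt (fun ε ↦ damping ε x) 0 := by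
    unfold damping
    exact ContinuousAt.inv₀ (by fun_prop) (by simp)
  simpa [damping] using hcont.tendsto.mono_left nhdsWithin_le_nhds

/-- The damped Japanese bracket `(1 + |x|²)^{1/2} / (1 + ε (1 + |x|²))`. -/
def dampedBracket (ε : ℝ) (x : E) : ℝ := √(1 + ‖x‖ ^ 2) * damping ε x

lemma dampedBracket_nonneg (hε : 0 < ε) (x : E) : 0 ≤ dampedBracket ε x :=
  mul_nonneg (Real.sqrt_nonneg _) (damping_pos hε x).le

lemma dampedBracket_sq (x : E) : dampedBracket ε x ^ 2 = (1 + ‖x‖ ^ 2) * damping ε x ^ 2 := by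
  rw [dampedBracket, mul_pow, Real.sq_sqrt (by positivity)]

lemma dampedBracket_mul_hardyWeight (x : E) : dampedBracket ε x * hardyWeight x = damping ε x := by
  rw [dampedBracket, hardyWeight, mul_right_comm, mul_inv_cancel₀ (by positivity), one_mul]

lemma dampedBracket_sq_le (hε : 0 < ε) (x : E) :
    dampedBracket ε x ^ 2 ≤ 1 + ‖x‖ ^ 2 := by
  rw [dampedBracket_sq]
  exact mul_le_of_le_one_right (by positivity)
    (pow_le_one₀ (damping_pos hε x).le (damping_le_one hε x))

variable [InnerProductSpace ℝ E]

lemma contDiff_damping (hε : 0 < ε) {n : ℕ∞ω} : ContDiff ℝ n (damping ε : E → ℝ) :=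
  (contDiff_const.add (contDiff_const.mul (contDiff_const.add (contDiff_norm_sq ℝ)))).inv
    fun x ↦ by positivity

lemma hasGradientAt_damping [CompleteSpace E] (hε : 0 < ε) (x : E) :
    HasGradientAt (damping ε) (-(2 * ε * damping ε x ^ 2) • x) x := by
  have hderiv : HasDerivAt (fun s : ℝ ↦ (1 + ε * (1 + s))⁻¹)
      (-(ε * 1) / (1 + ε * (1 + ‖x‖ ^ 2)) ^ 2) (‖x‖ ^ 2) :=
    ((((hasDerivAt_id _).const_add 1).const_mul ε).const_add 1).inv (by positivity)
  have hcoeff : -(2 * ε * damping ε x ^ 2) = 2 * (-(ε * 1) / (1 + ε * (1 + ‖x‖ ^ 2)) ^ 2) := by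
    rw [damping, inv_pow]
    ring
  exact hcoeff ▸ hasGradientAt_comp_norm_sq hderiv

lemma abs_inner_apply_self_le {T : E →L[ℝ] E} (x : E) : |⟪T x, x⟫| ≤ ‖T‖ * ‖x‖ ^ 2 := by
  refine (abs_real_inner_le_norm _ _).trans ?_
  rw [pow_two, ← mul_assoc]
  gcongr
  exact T.le_opNorm x

/-- The damped quadratic form `⟪T x, x⟫ / (1 + ε (1 + |x|²))`. -/
def dampedQuadraticForm (T : E →L[ℝ] E) (ε : ℝ) (x : E) : ℝ := damping ε x * ⟪T x, x⟫

lemma abs_dampedQuadraticForm_le {T : E →L[ℝ] E} (hε : 0 < ε) (x : E) :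
    |dampedQuadraticForm T ε x| ≤ ‖T‖ * ‖x‖ ^ 2 := by
  rw [dampedQuadraticForm, abs_mul, abs_of_pos (damping_pos hε x)]
  exact (mul_le_of_le_one_left (abs_nonneg _) (damping_le_one hε x)).trans
    (abs_inner_apply_self_le x)

variable [CompleteSpace E]

lemma hasGradientAt_dampedBracket (hε : 0 < ε) (x : E) : HasGradientAt (dampedBracket ε)
    ((hardyWeight x * damping ε x * (1 - 2 * (ε * (1 + ‖x‖ ^ 2) * damping ε x))) • x) x := by
  have hsqrt : HasDerivAt (fun s : ℝ ↦ √(1 + s)) (1 / (2 * √(1 + ‖x‖ ^ 2))) (‖x‖ ^ 2) :=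
    ((hasDerivAt_id _).const_add 1).sqrt (by positivity)
  have hprod := hasGradientAt_mul (hasGradientAt_comp_norm_sq hsqrt) (hasGradientAt_damping hε x)
  rw [smul_smul, smul_smul, ← add_smul] at hprod
  convert! hprod using 2
  rw [hardyWeight]
  have hs : √(1 + ‖x‖ ^ 2) ≠ 0 := by positivity
  field_simp
  rw [Real.sq_sqrt (by positivity)]
  ring

lemma norm_gradient_dampedBracket_le (hε : 0 < ε) (x : E) :
    ‖∇ (dampedBracket ε) x‖ ≤ damping ε x := by
  have hr := damping_pos hε x
  have hq := hardyWeight_pos x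
  have hfactor : |1 - 2 * (ε * (1 + ‖x‖ ^ 2) * damping ε x)| ≤ 1 := by
    have : 0 ≤ ε * (1 + ‖x‖ ^ 2) * damping ε x := by positivity
    exact abs_le.2 ⟨by linarith [mul_damping_le_one hε x], by linarith⟩
  rw [(hasGradientAt_dampedBracket hε x).gradient, norm_smul, norm_mul, norm_mul,
    Real.norm_of_nonneg hr.le, Real.norm_of_nonneg hq.le, Real.norm_eq_abs]
  calc hardyWeight x * damping ε x * |1 - 2 * (ε * (1 + ‖x‖ ^ 2) * damping ε x)| * ‖x‖
      ≤ hardyWeight x * damping ε x * 1 * ‖x‖ := by gcongr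
    _ = damping ε x * (‖x‖ * hardyWeight x) := by ring
    _ ≤ damping ε x := mul_le_of_le_one_right hr.le (norm_mul_hardyWeight_le_one x)

lemma isDirichletMultiplier_dampedBracket (hε : 0 < ε) :
    IsDirichletMultiplier (dampedBracket ε : E → ℝ) := by
  refine ⟨?_, ⟨ε⁻¹, fun x ↦ ?_⟩, ⟨ε⁻¹, fun x ↦ ?_⟩⟩
  · exact ((contDiff_const.add (contDiff_norm_sq ℝ)).sqrt fun x ↦ by positivity).mul
      (contDiff_damping hε)
  · rw [Real.norm_of_nonneg (dampedBracket_nonneg hε x), ← one_div, le_div_iff₀' hε]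
    refine le_trans ?_ (mul_damping_le_one hε x)
    have := (damping_pos hε x).le
    rw [dampedBracket, mul_assoc]
    gcongr
    exact Real.sqrt_le_self_iff.2 (.inr (by simp))
  · refine (norm_gradient_dampedBracket_le hε x).trans
      ((damping_le_inv_mul_hardyWeight_sq hε x).trans ?_)
    gcongr
    exact pow_le_of_le_one (hardyWeight_pos x).le (hardyWeight_le_one x) two_ne_zero

variable {T : E →L[ℝ] E}

lemma hasGradientAt_dampedQuadraticForm (hT : T.IsSymmetric) (hε : 0 < ε) (x : E) :
    HasGradientAt (dampedQuadraticForm T ε)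
      ((2 * damping ε x) • T x - (2 * ε * damping ε x ^ 2 * ⟪T x, x⟫) • x) x := by
  have hform : HasGradientAt (fun y ↦ ⟪T y, y⟫) ((2 : ℝ) • T x) x := by
    refine hasGradientAt_iff_hasFDerivAt.2
      ((T.hasFDerivAt.inner ℝ (hasFDerivAt_id x)).congr_fderiv ?_)
    ext y
    have hsymm : ⟪T y, x⟫ = ⟪T x, y⟫ := (hT y x).trans (real_inner_comm _ _)
    simp [hsymm, two_mul]
  convert! hasGradientAt_mul (hasGradientAt_damping hε x) hform using 1
  module

lemma norm_gradient_dampedQuadraticForm_le (hT : T.IsSymmetric) (hε : 0 < ε) (x : E) :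
    ‖∇ (dampedQuadraticForm T ε) x‖ ≤ 4 * ‖T‖ * (damping ε x * ‖x‖) := by
  have hr := (damping_pos hε x).le
  have hdamp : ε * ‖x‖ ^ 2 * damping ε x ≤ 1 := by
    nlinarith [mul_damping_le_one hε x]
  rw [(hasGradientAt_dampedQuadraticForm hT hε x).gradient]
  calc _ ≤ 2 * damping ε x * ‖T x‖ + 2 * ε * damping ε x ^ 2 * |⟪T x, x⟫| * ‖x‖ := by
        refine (norm_sub_le _ _).trans_eq ?_
        rw [norm_smul, norm_smul, Real.norm_of_nonneg (by positivity), norm_mul,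
          Real.norm_of_nonneg (by positivity), Real.norm_eq_abs]
    _ ≤ 2 * damping ε x * (‖T‖ * ‖x‖) +
          2 * ε * damping ε x ^ 2 * (‖T‖ * ‖x‖ ^ 2) * ‖x‖ := by
        gcongr
        exacts [T.le_opNorm x, abs_inner_apply_self_le x]
    _ = 2 * ‖T‖ * (damping ε x * ‖x‖) * (1 + ε * ‖x‖ ^ 2 * damping ε x) := by ring
    _ ≤ 2 * ‖T‖ * (damping ε x * ‖x‖) * (1 + 1) := by gcongr
    _ = 4 * ‖T‖ * (damping ε x * ‖x‖) := by ring

lemma isDirichletMultiplier_dampedQuadraticForm (hT : T.IsSymmetric) (hε : 0 < ε) :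
    IsDirichletMultiplier (dampedQuadraticForm T ε) := by
  have hr (x : E) := (damping_pos hε x).le
  refine ⟨?_, ⟨‖T‖ * ε⁻¹, fun x ↦ ?_⟩, ⟨4 * ‖T‖ * ε⁻¹, fun x ↦ ?_⟩⟩
  · exact (contDiff_damping hε).mul (T.contDiff.inner ℝ contDiff_id)
  · have hle : ‖x‖ ^ 2 * damping ε x ≤ ε⁻¹ := by
      rw [← one_div, le_div_iff₀' hε]
      nlinarith [mul_damping_le_one hε x, hr x]
    calc ‖dampedQuadraticForm T ε x‖ = |⟪T x, x⟫| * damping ε x := by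
          rw [dampedQuadraticForm, norm_mul, Real.norm_of_nonneg (hr x), Real.norm_eq_abs,
            mul_comm]
      _ ≤ ‖T‖ * ‖x‖ ^ 2 * damping ε x :=
          mul_le_mul_of_nonneg_right (abs_inner_apply_self_le x) (hr x)
      _ = ‖T‖ * (‖x‖ ^ 2 * damping ε x) := mul_assoc _ _ _
      _ ≤ ‖T‖ * ε⁻¹ := by gcongr
  · refine (norm_gradient_dampedQuadraticForm_le hT hε x).trans ?_
    rw [mul_assoc _ ε⁻¹]
    exact mul_le_mul_of_nonneg_left (damping_mul_norm_le hε x) (by positivity)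

end Damping

section Extremal

variable {E : Type*} [NormedAddCommGroup E] [InnerProductSpace ℝ E] [FiniteDimensional ℝ E]
  [MeasurableSpace E] [BorelSpace E]

/-- An extremal of a Hardy–Sobolev inequality, normalised: `u` is the extremal function, `g` its
weak gradient, `μ` the probability measure with density `|u|^p` against the Hardy–Sobolev weight,
and `S` the best constant. The inequality is only recorded for the competitors `η u`, for which it
reads `S ‖η‖²_{L^p(μ)} ≤ ∫ |∇(η u)|²`. -/
structure IsHardySobolevExtremal (p : ℝ≥0∞) (S : ℝ) (μ : Measure E) (u : E → ℝ) (g : E → E) :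
    Prop where
  two_lt_exponent : 2 < p
  exponent_ne_top : p ≠ ⊤
  const_pos : 0 < S
  isProbabilityMeasure : IsProbabilityMeasure μ
  hasDirichletGradient : HasDirichletGradient u g
  integral_norm_sq : ∫ x, ‖g x‖ ^ 2 = S
  sqrt_mul_eLpNorm_le : ∀ η : E → ℝ, IsDirichletMultiplier η →
    ENNReal.ofReal √S * eLpNorm η p μ ≤ eLpNorm (leibnizGradient u g η) 2

lemma IsDirichletMultiplier.memLp {μ : Measure E} [IsFiniteMeasure μ] {η : E → ℝ}
    (hη : IsDirichletMultiplier η) {p : ℝ≥0∞} : MemLp η p μ :=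
  let ⟨C, hC⟩ := hη.bounded
  .of_bound hη.contDiff.continuous.aestronglyMeasurable C (.of_forall hC)

namespace IsHardySobolevExtremal

variable {p : ℝ≥0∞} {S : ℝ} {μ : Measure E} {u η : E → ℝ} {g : E → E}

lemma one_div_two_sub_pos (h : IsHardySobolevExtremal p S μ u g) : 0 < 1 / 2 - 1 / p.toReal :=
  sub_pos.2 <| one_div_lt_one_div_of_lt two_pos <| by
    simpa using ENNReal.toReal_strict_mono h.exponent_ne_top h.two_lt_exponent

lemma mul_setIntegral_sq_le (h : IsHardySobolevExtremal p S μ u g) (hE : 2 < finrank ℝ E)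
    (hη : IsDirichletMultiplier η) (A : Set E) :
    S * ∫ x in A, η x ^ 2 ∂μ ≤
      (μ.real A ^ (1 / 2 - 1 / p.toReal)) ^ 2 * ∫ x, ‖leibnizGradient u g η x‖ ^ 2 := by
  have := h.isProbabilityMeasure
  have hgrad := (h.hasDirichletGradient.mul hE hη).memLp
  have holder : eLpNorm η 2 (μ.restrict A) ≤
      eLpNorm η p μ * ENNReal.ofReal (μ.real A ^ (1 / 2 - 1 / p.toReal)) := by
    refine (eLpNorm_le_eLpNorm_mul_rpow_measure_univ h.two_lt_exponent.le
      hη.contDiff.continuous.aestronglyMeasurable).trans ?_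
    rw [Measure.restrict_apply_univ, ENNReal.toReal_ofNat,
      ← ENNReal.ofReal_rpow_of_nonneg measureReal_nonneg h.one_div_two_sub_pos.le,
      ofReal_measureReal]
    gcongr
    exact Measure.restrict_le_self
  have hle : eLpNorm (√S • η) 2 (μ.restrict A) ≤
      ENNReal.ofReal (μ.real A ^ (1 / 2 - 1 / p.toReal)) * eLpNorm (leibnizGradient u g η) 2 := by
    rw [eLpNorm_const_smul, Real.enorm_of_nonneg (Real.sqrt_nonneg S)]
    calc _ ≤ ENNReal.ofReal √S *
          (eLpNorm η p μ * ENNReal.ofReal (μ.real A ^ (1 / 2 - 1 / p.toReal))) := by gcongr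
      _ = ENNReal.ofReal (μ.real A ^ (1 / 2 - 1 / p.toReal)) *
          (ENNReal.ofReal √S * eLpNorm η p μ) := by ring
      _ ≤ _ := by gcongr; exact h.sqrt_mul_eLpNorm_le η hη
  rw [eLpNorm_two_le_ofReal_mul_iff (hη.memLp.const_smul _) hgrad (by positivity)] at hle
  simpa only [Pi.smul_apply, norm_smul, mul_pow, Real.norm_eq_abs, sq_abs,
    Real.sq_sqrt h.const_pos.le, integral_const_mul] using hle

lemma mul_integral_sq_le (h : IsHardySobolevExtremal p S μ u g) (hE : 2 < finrank ℝ E)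
    (hη : IsDirichletMultiplier η) :
    S * ∫ x, η x ^ 2 ∂μ ≤ ∫ x, ‖leibnizGradient u g η x‖ ^ 2 := by
  have := h.isProbabilityMeasure
  simpa using h.mul_setIntegral_sq_le hE hη univ

/-- Obtained by testing minimality against the perturbations `(1 + ε η) u`. -/
theorem integral_inner_eq (h : IsHardySobolevExtremal p S μ u g) (hE : 2 < finrank ℝ E)
    (hη : IsDirichletMultiplier η) :
    ∫ x, ⟪g x, leibnizGradient u g η x⟫ = S * ∫ x, η x ∂μ := by
  have := h.isProbabilityMeasure
  have hg := h.hasDirichletGradient.memLp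
  have hgrad := (h.hasDirichletGradient.mul hE hη).memLp
  have minimality (ε : ℝ) : 0 ≤
      ((∫ x, ‖leibnizGradient u g η x‖ ^ 2) - S * ∫ x, η x ^ 2 ∂μ) * (ε * ε) +
        2 * ((∫ x, ⟪g x, leibnizGradient u g η x⟫) - S * ∫ x, η x ∂μ) * ε + 0 := by
    have hηε := hη.const_add_const_mul 1 ε
    have hμ : ∫ x, (1 + ε * η x) ^ 2 ∂μ = 1 + 2 * ε * ∫ x, η x ∂μ + ε ^ 2 * ∫ x, η x ^ 2 ∂μ := by
      have := integral_norm_add_smul_sq (μ := μ) (memLp_const (1 : ℝ)) hη.memLp ε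
      simpa using this
    have hvol : leibnizGradient u g (fun x ↦ 1 + ε * η x) =
        g + ε • (leibnizGradient u g η) := by
      ext1 x
      simp only [leibnizGradient, Pi.add_apply, Pi.smul_apply, hη.gradient_const_add_const_mul]
      module
    have hmin := h.mul_integral_sq_le hE hηε
    rw [hvol, hμ] at hmin
    have hexpand := integral_norm_add_smul_sq hg hgrad ε
    rw [h.integral_norm_sq] at hexpand
    linarith [hmin.trans_eq hexpand]
  have := discrim_le_zero minimality
  rw [discrim] at this
  nlinarith

end IsHardySobolevExtremal
end Extremal

section Decay

variable {E : Type*} [NormedAddCommGroup E] [InnerProductSpace ℝ E] [FiniteDimensional ℝ E]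
  [MeasurableSpace E] [BorelSpace E]

lemma integrable_one_add_norm_sq_mul {μ : Measure E} {f : E → ℝ} {C : ℝ} (hf : Integrable f μ)
    (hf0 : ∀ x, 0 ≤ f x) (hC : ∀ ε > 0, ∫ x, dampedBracket ε x ^ 2 * f x ∂μ ≤ C) :
    Integrable (fun x ↦ (1 + ‖x‖ ^ 2) * f x) μ := by
  let ε (n : ℕ) : ℝ := 1 / (n + 1)
  have hε (n) : 0 < ε n := Nat.one_div_pos_of_nat
  have hεlim : Tendsto ε atTop (𝓝[>] 0) := tendsto_nhdsWithin_iff.2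
    ⟨tendsto_one_div_add_atTop_nhds_zero_nat, .of_forall hε⟩
  refine integrable_of_tendsto_of_integral_norm_le (C := C)
    (f := fun n x ↦ dampedBracket (ε n) x ^ 2 * f x) (fun n ↦ ?_) (fun n ↦ ?_)
    (.of_forall fun x ↦ ?_)
  · have hψ := isDirichletMultiplier_dampedBracket (E := E) (hε n)
    have hψψ := hψ.mul hψ
    obtain ⟨D, hD⟩ := hψψ.bounded
    simp only [pow_two]
    exact hf.bdd_mul hψψ.contDiff.continuous.aestronglyMeasurable (.of_forall hD)
  · refine (integral_congr_ae (.of_forall fun x ↦ ?_)).trans_le (hC (ε n) (hε n))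
    exact Real.norm_of_nonneg (mul_nonneg (sq_nonneg _) (hf0 x))
  · have hlim := (((tendsto_damping x).comp hεlim).pow 2).const_mul (1 + ‖x‖ ^ 2)
    simp only [one_pow, mul_one] at hlim
    exact (hlim.mul_const (f x)).congr fun n ↦ by rw [dampedBracket_sq, Function.comp_apply]

namespace IsHardySobolevExtremal

variable {p : ℝ≥0∞} {S : ℝ} {μ : Measure E} {u η : E → ℝ} {g : E → E}

/-- The IMS localisation formula, from the Euler–Lagrange equation tested with `η²`. -/
lemma integral_norm_sq_eq (h : IsHardySobolevExtremal p S μ u g) (hE : 2 < finrank ℝ E)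
    (hη : IsDirichletMultiplier η) :
    ∫ x, ‖leibnizGradient u g η x‖ ^ 2 = S * (∫ x, η x ^ 2 ∂μ) + ∫ x, ‖u x • ∇ η x‖ ^ 2 := by
  have hηη := hη.mul hη
  have hgrad := (h.hasDirichletGradient.mul hE hηη).memLp
  have hinner := integrable_inner_of_memLp_two h.hasDirichletGradient.memLp hgrad
  have hcut := (h.hasDirichletGradient.memLp_smul_gradient hE hη).integrable_norm_pow two_ne_zero
  have euler_lagrange : ∫ x, ⟪g x, leibnizGradient u g (η * η) x⟫ = S * ∫ x, η x ^ 2 ∂μ := by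
    simpa only [Pi.mul_apply, ← pow_two (η _)] using h.integral_inner_eq hE hηη
  rw [← euler_lagrange, ← integral_add hinner hcut]
  refine integral_congr_ae (.of_forall fun x ↦ ?_)
  simp only [leibnizGradient, hη.gradient_mul hη, Pi.add_apply, Pi.smul_apply', Pi.mul_apply,
    norm_add_sq_real, norm_smul, mul_pow, inner_add_right, inner_smul_right, real_inner_smul_left,
    real_inner_self_eq_norm_sq, Real.norm_eq_abs, sq_abs]
  ring

lemma exists_forall_setIntegral_sq_le (h : IsHardySobolevExtremal p S μ u g)
    (hE : 2 < finrank ℝ E) {θ : ℝ} (hθ : 0 < θ) :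
    ∃ R : ℝ, ∀ η : E → ℝ, IsDirichletMultiplier η →
      S * ∫ x in (closedBall 0 R)ᶜ, η x ^ 2 ∂μ ≤ θ * ∫ x, ‖leibnizGradient u g η x‖ ^ 2 := by
  have := h.isProbabilityMeasure
  have hδ := h.one_div_two_sub_pos
  have tail : Tendsto (fun R ↦ (μ.real (closedBall 0 R)ᶜ ^ (1 / 2 - 1 / p.toReal)) ^ 2) atTop
      (𝓝 0) := by
    have hμ := tendsto_measure_compl_closedBall_of_isTightMeasureSet
      (isTightMeasureSet_singleton (μ := μ)) 0
    simp only [mem_singleton_iff, iSup_iSup_eq_left] at hμ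
    have hreal := (ENNReal.tendsto_toReal ENNReal.zero_ne_top).comp hμ
    have hpow := (hreal.rpow_const (.inr hδ.le)).pow 2
    rwa [ENNReal.toReal_zero, Real.zero_rpow hδ.ne', zero_pow two_ne_zero] at hpow
  obtain ⟨R, hR⟩ := (tail.eventually_le_const hθ).exists
  exact ⟨R, fun η hη ↦ (h.mul_setIntegral_sq_le hE hη _).trans (by gcongr)⟩

lemma integral_norm_smul_gradient_dampedBracket_sq_le (h : IsHardySobolevExtremal p S μ u g)
    (hE : 5 ≤ finrank ℝ E) {ε : ℝ} (hε : 0 < ε) :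
    ∫ x, ‖u x • ∇ (dampedBracket ε) x‖ ^ 2 ≤
      4 / 9 * ∫ x, ‖leibnizGradient u g (dampedBracket ε) x‖ ^ 2 := by
  have hu := h.hasDirichletGradient
  have hψ := isDirichletMultiplier_dampedBracket (E := E) hε
  have hψu := hu.mul (by lia) hψ
  calc ∫ x, ‖u x • ∇ (dampedBracket ε) x‖ ^ 2
      ≤ ∫ x, (dampedBracket ε x * u x) ^ 2 * hardyWeight x ^ 2 := by
        refine integral_mono ((hu.memLp_smul_gradient (by lia) hψ).integrable_norm_pow two_ne_zero)
          (hψu.integrable_sq_mul_hardyWeight_sq (by lia)) fun x ↦ ?_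
        have hweight : (dampedBracket ε x * u x) ^ 2 * hardyWeight x ^ 2 =
            u x ^ 2 * damping ε x ^ 2 := by
          rw [← dampedBracket_mul_hardyWeight]
          ring
        beta_reduce
        rw [hweight, norm_smul, mul_pow, Real.norm_eq_abs, sq_abs]
        gcongr
        exact norm_gradient_dampedBracket_le hε x
    _ ≤ hardyConst E ^ 2 * ∫ x, ‖leibnizGradient u g (dampedBracket ε) x‖ ^ 2 :=
        hψu.integral_sq_mul_hardyWeight_sq_le (by lia)
    _ ≤ 4 / 9 * ∫ x, ‖leibnizGradient u g (dampedBracket ε) x‖ ^ 2 := by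
        have := hardyConst_le hE
        have := hardyConst_pos (E := E) (by lia)
        gcongr
        nlinarith

lemma exists_forall_integral_norm_sq_le (h : IsHardySobolevExtremal p S μ u g)
    (hE : 5 ≤ finrank ℝ E) : ∃ C, ∀ ε > 0,
    ∫ x, ‖leibnizGradient u g (dampedBracket ε) x‖ ^ 2 ≤ C := by
  have := h.isProbabilityMeasure
  obtain ⟨R, hR⟩ := h.exists_forall_setIntegral_sq_le (by lia) (θ := 1 / 9) (by norm_num)
  refine ⟨9 / 4 * (S * (1 + R ^ 2)), fun ε hε ↦ ?_⟩
  have hψ := isDirichletMultiplier_dampedBracket (E := E) hε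
  have hψ2 : Integrable (fun x ↦ dampedBracket ε x ^ 2) μ := hψ.memLp.integrable_sq
  have inside : ∫ x in closedBall 0 R, dampedBracket ε x ^ 2 ∂μ ≤ 1 + R ^ 2 := by
    calc ∫ x in closedBall 0 R, dampedBracket ε x ^ 2 ∂μ
        ≤ ∫ x in closedBall 0 R, (1 + R ^ 2) ∂μ := by
          refine setIntegral_mono_on hψ2.integrableOn (by simp) measurableSet_closedBall
            fun x hx ↦ (dampedBracket_sq_le hε x).trans ?_
          gcongr
          exact mem_closedBall_zero_iff.1 hx
      _ ≤ 1 + R ^ 2 := by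
          rw [setIntegral_const, smul_eq_mul]
          exact mul_le_of_le_one_left (by positivity) measureReal_le_one
  have outside := hR _ hψ
  have ims := h.integral_norm_sq_eq (by lia) hψ
  have hardy := h.integral_norm_smul_gradient_dampedBracket_sq_le hE hε
  rw [← integral_add_compl (s := closedBall 0 R) measurableSet_closedBall hψ2] at ims
  nlinarith [mul_le_mul_of_nonneg_left inside h.const_pos.le]

theorem integrable_one_add_norm_sq (h : IsHardySobolevExtremal p S μ u g)
    (hE : 5 ≤ finrank ℝ E) : Integrable (fun x ↦ 1 + ‖x‖ ^ 2) μ := by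
  have := h.isProbabilityMeasure
  obtain ⟨C, hC⟩ := h.exists_forall_integral_norm_sq_le hE
  have hone := integrable_one_add_norm_sq_mul (μ := μ) (f := fun _ ↦ 1) (C := S⁻¹ * C)
    (integrable_const 1) (fun _ ↦ zero_le_one) fun ε hε ↦ by
      simp only [mul_one]
      exact (le_inv_mul_iff₀ h.const_pos).2 ((h.mul_integral_sq_le (by lia)
        (isDirichletMultiplier_dampedBracket hε)).trans (hC ε hε))
  simpa using hone

theorem integrable_sq (h : IsHardySobolevExtremal p S μ u g) (hE : 5 ≤ finrank ℝ E) :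
    Integrable (fun x ↦ u x ^ 2) := by
  obtain ⟨C, hC⟩ := h.exists_forall_integral_norm_sq_le hE
  have hu := h.hasDirichletGradient
  have huq := integrable_one_add_norm_sq_mul (C := hardyConst E ^ 2 * C)
    (hu.integrable_sq_mul_hardyWeight_sq (by lia)) (fun x ↦ by positivity) fun ε hε ↦ by
      have hψu := hu.mul (by lia) (isDirichletMultiplier_dampedBracket hε)
      have hardy := hψu.integral_sq_mul_hardyWeight_sq_le (by lia)
      simp only [Pi.mul_apply, mul_pow, mul_assoc] at hardy
      exact hardy.trans (mul_le_mul_of_nonneg_left (hC ε hε) (sq_nonneg _))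
  refine huq.congr (.of_forall fun x ↦ ?_)
  simp only [hardyWeight_sq]
  field_simp

theorem integrable_one_add_norm_sq_mul_norm_sq (h : IsHardySobolevExtremal p S μ u g)
    (hE : 5 ≤ finrank ℝ E) : Integrable (fun x ↦ (1 + ‖x‖ ^ 2) * ‖g x‖ ^ 2) := by
  obtain ⟨C, hC⟩ := h.exists_forall_integral_norm_sq_le hE
  have hu := h.hasDirichletGradient
  refine integrable_one_add_norm_sq_mul (C := 4 * C) (hu.memLp.integrable_norm_pow two_ne_zero)
    (fun x ↦ sq_nonneg _) fun ε hε ↦ ?_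
  have hψ := isDirichletMultiplier_dampedBracket (E := E) hε
  have hsum := (hu.mul (by lia) hψ).memLp.integrable_norm_pow two_ne_zero
  have hcut := (hu.memLp_smul_gradient (by lia) hψ).integrable_norm_pow two_ne_zero
  have pointwise (x) : dampedBracket ε x ^ 2 * ‖g x‖ ^ 2 ≤
      2 * ‖leibnizGradient u g (dampedBracket ε) x‖ ^ 2 +
        2 * ‖u x • ∇ (dampedBracket ε) x‖ ^ 2 := by
    have hsub : dampedBracket ε x • g x =
        leibnizGradient u g (dampedBracket ε) x - u x • ∇ (dampedBracket ε) x :=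
      (add_sub_cancel_right _ _).symm
    calc dampedBracket ε x ^ 2 * ‖g x‖ ^ 2 = ‖dampedBracket ε x • g x‖ ^ 2 := by
          rw [norm_smul, mul_pow, Real.norm_eq_abs, sq_abs]
      _ ≤ (‖leibnizGradient u g (dampedBracket ε) x‖ + ‖u x • ∇ (dampedBracket ε) x‖) ^ 2 := by
          rw [hsub]
          gcongr
          exact norm_sub_le _ _
      _ ≤ _ := by rw [← mul_add]; exact add_sq_le
  have hψg := (hψ.memLp_smul hu.memLp).integrable_norm_pow two_ne_zero
  simp only [Pi.smul_apply', norm_smul, mul_pow, Real.norm_eq_abs, sq_abs] at hψg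
  have hmono := integral_mono hψg ((hsum.const_mul 2).fun_add (hcut.const_mul 2)) pointwise
  rw [integral_add (hsum.const_mul 2) (hcut.const_mul 2), integral_const_mul,
    integral_const_mul] at hmono
  have hsum_le := hC ε hε
  have hcut_le := h.integral_norm_smul_gradient_dampedBracket_sq_le hE hε
  have hcut_nonneg : 0 ≤ ∫ x, ‖u x • ∇ (dampedBracket ε) x‖ ^ 2 := by positivity
  linarith

end IsHardySobolevExtremal
end Decay

section Virial

variable {E : Type*} [NormedAddCommGroup E] [InnerProductSpace ℝ E]

lemma abs_inner_smul_le {c : ℝ} (hc : 0 ≤ c) {x y v : E} (hv : ‖v‖ ≤ c * ‖x‖) (b : ℝ) :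
    |⟪y, b • v⟫| ≤ c * (b ^ 2 + (1 + ‖x‖ ^ 2) * ‖y‖ ^ 2) :=
  calc |⟪y, b • v⟫| ≤ ‖y‖ * (|b| * (c * ‖x‖)) := by
        refine (abs_real_inner_le_norm _ _).trans ?_
        rw [norm_smul, Real.norm_eq_abs]
        gcongr
    _ = c * (|b| * (‖x‖ * ‖y‖)) := by ring
    _ ≤ c * (b ^ 2 + (1 + ‖x‖ ^ 2) * ‖y‖ ^ 2) := by
        gcongr
        nlinarith [sq_nonneg (|b| - ‖x‖ * ‖y‖), sq_abs b, sq_nonneg (|b| + ‖x‖ * ‖y‖)]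

lemma tendsto_dampedQuadraticForm (T : E →L[ℝ] E) (x : E) :
    Tendsto (fun ε ↦ dampedQuadraticForm T ε x) (𝓝[>] 0) (𝓝 ⟪T x, x⟫) := by
  simpa only [dampedQuadraticForm, one_mul] using (tendsto_damping x).mul_const ⟪T x, x⟫

variable [FiniteDimensional ℝ E] {ε : ℝ} {T : E →L[ℝ] E}

lemma divergence_damping_smul_apply (hε : 0 < ε) (x : E) :
    divergence (fun y ↦ damping ε y • T y) x =
      damping ε x * T.toLinearMap.trace ℝ E - 2 * ε * damping ε x ^ 2 * ⟪T x, x⟫ := by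
  have hgrad := hasGradientAt_damping hε x
  rw [divergence_smul_apply hgrad.differentiableAt, hgrad.gradient, real_inner_smul_left,
    real_inner_comm]
  ring

lemma abs_divergence_damping_smul_le (hε : 0 < ε) (x : E) :
    |divergence (fun y ↦ damping ε y • T y) x| ≤
      (|T.toLinearMap.trace ℝ E| + 2 * ‖T‖) * damping ε x := by
  have hr := damping_pos hε x
  have hdamp : ε * ‖x‖ ^ 2 * damping ε x ≤ 1 := by nlinarith [mul_damping_le_one hε x]
  rw [divergence_damping_smul_apply hε]
  calc _ ≤ |damping ε x * T.toLinearMap.trace ℝ E| + |2 * ε * damping ε x ^ 2 * ⟪T x, x⟫| :=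
        abs_sub _ _
    _ = damping ε x * |T.toLinearMap.trace ℝ E| + 2 * ε * damping ε x ^ 2 * |⟪T x, x⟫| := by
        have hcoeff : 0 < 2 * ε * damping ε x ^ 2 := by positivity
        rw [abs_mul, abs_mul (2 * ε * damping ε x ^ 2), abs_of_pos hr, abs_of_pos hcoeff]
    _ ≤ damping ε x * |T.toLinearMap.trace ℝ E| +
          2 * ε * damping ε x ^ 2 * (‖T‖ * ‖x‖ ^ 2) := by
        gcongr
        exact abs_inner_apply_self_le x
    _ = (|T.toLinearMap.trace ℝ E| + 2 * ‖T‖ * (ε * ‖x‖ ^ 2 * damping ε x)) * damping ε x := by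
        ring
    _ ≤ (|T.toLinearMap.trace ℝ E| + 2 * ‖T‖) * damping ε x := by
        have := mul_le_of_le_one_right (a := 2 * ‖T‖) (by positivity) hdamp
        gcongr

lemma tendsto_divergence_damping_smul (T : E →L[ℝ] E) (x : E) :
    Tendsto (fun ε ↦ divergence (fun y ↦ damping ε y • T y) x) (𝓝[>] 0)
      (𝓝 (T.toLinearMap.trace ℝ E)) := by
  have hdamp := tendsto_damping x
  have hid : Tendsto (fun ε : ℝ ↦ ε) (𝓝[>] 0) (𝓝 0) :=
    tendsto_nhdsWithin_of_tendsto_nhds tendsto_id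
  have hlim := (hdamp.mul_const (T.toLinearMap.trace ℝ E)).sub
    (((hid.const_mul 2).mul (hdamp.pow 2)).mul_const ⟪T x, x⟫)
  simp only [mul_zero, zero_mul, one_mul, sub_zero] at hlim
  refine hlim.congr' ?_
  filter_upwards [self_mem_nhdsWithin] with ε hε
  rw [divergence_damping_smul_apply hε]

lemma tendsto_gradient_dampedQuadraticForm (hT : T.IsSymmetric) (x : E) :
    Tendsto (fun ε ↦ ∇ (dampedQuadraticForm T ε) x) (𝓝[>] 0) (𝓝 ((2 : ℝ) • T x)) := by
  have hdamp := tendsto_damping x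
  have hid : Tendsto (fun ε : ℝ ↦ ε) (𝓝[>] 0) (𝓝 0) :=
    tendsto_nhdsWithin_of_tendsto_nhds tendsto_id
  have hlim := ((hdamp.const_mul 2).smul_const (T x)).sub
    ((((hid.const_mul 2).mul (hdamp.pow 2)).mul_const ⟪T x, x⟫).smul_const x)
  simp only [mul_zero, zero_mul, zero_smul, mul_one, sub_zero] at hlim
  refine hlim.congr' ?_
  filter_upwards [self_mem_nhdsWithin] with ε hε
  rw [(hasGradientAt_dampedQuadraticForm hT hε x).gradient]

variable [MeasurableSpace E] [BorelSpace E] {u : E → ℝ} {g : E → E}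

lemma HasDirichletGradient.integral_sq_mul_divergence_damping_smul (hE : 2 < finrank ℝ E)
    (hu : HasDirichletGradient u g) (hε : 0 < ε) :
    ∫ x, u x ^ 2 * divergence (fun y ↦ damping ε y • T y) x =
      -(2 * ∫ x, ⟪g x, u x • damping ε x • T x⟫) := by
  refine hu.integral_sq_mul_divergence hE (C := (|T.toLinearMap.trace ℝ E| + 2 * ‖T‖) * ε⁻¹)
    ((contDiff_damping hε).smul T.contDiff) (fun x ↦ ?_) fun x ↦ ?_
  · calc ‖damping ε x • T x‖ ≤ damping ε x * (‖T‖ * ‖x‖) := by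
          rw [norm_smul, Real.norm_of_nonneg (damping_pos hε x).le]
          have := (damping_pos hε x).le
          gcongr
          exact T.le_opNorm x
      _ = ‖T‖ * (damping ε x * ‖x‖) := by ring
      _ ≤ (|T.toLinearMap.trace ℝ E| + 2 * ‖T‖) * (ε⁻¹ * hardyWeight x) := by
          have := (damping_pos hε x).le
          refine mul_le_mul ?_ (damping_mul_norm_le hε x) (by positivity) (by positivity)
          linarith [abs_nonneg (T.toLinearMap.trace ℝ E), norm_nonneg T]
      _ = _ := by ring
  · refine (abs_divergence_damping_smul_le hε x).trans ?_
    rw [mul_assoc]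
    gcongr
    exact damping_le_inv_mul_hardyWeight_sq hε x

theorem HasDirichletGradient.trace_mul_integral_sq
    (hE : 2 < finrank ℝ E) (hu : HasDirichletGradient u g) (hu2 : Integrable (fun x ↦ u x ^ 2))
    (hg2 : Integrable (fun x ↦ (1 + ‖x‖ ^ 2) * ‖g x‖ ^ 2)) (T : E →L[ℝ] E) :
    T.toLinearMap.trace ℝ E * ∫ x, u x ^ 2 = -(2 * ∫ x, ⟪g x, u x • T x⟫) := by
  have hum := hu.aestronglyMeasurable
  have hgm := hu.memLp.aestronglyMeasurable
  have hTm : AEStronglyMeasurable T (volume : Measure E) := T.continuous.aestronglyMeasurable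
  have hleft : Tendsto (fun ε ↦ ∫ x, u x ^ 2 * divergence (fun y ↦ damping ε y • T y) x)
      (𝓝[>] 0) (𝓝 (∫ x, u x ^ 2 * T.toLinearMap.trace ℝ E)) := by
    refine tendsto_integral_filter_of_dominated_convergence
      (fun x ↦ u x ^ 2 * (|T.toLinearMap.trace ℝ E| + 2 * ‖T‖)) ?_ ?_ (hu2.mul_const _)
      (.of_forall fun x ↦ (tendsto_divergence_damping_smul T x).const_mul _)
    · filter_upwards [self_mem_nhdsWithin] with ε hε
      exact (hum.pow 2).mul (continuous_divergence
        ((contDiff_damping hε).smul T.contDiff)).aestronglyMeasurable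
    · filter_upwards [self_mem_nhdsWithin] with ε hε
      refine .of_forall fun x ↦ ?_
      rw [norm_mul, norm_pow, Real.norm_eq_abs, sq_abs]
      gcongr
      exact (abs_divergence_damping_smul_le hε x).trans
        (mul_le_of_le_one_right (by positivity) (damping_le_one hε x))
  have hright : Tendsto (fun ε ↦ ∫ x, ⟪g x, u x • damping ε x • T x⟫) (𝓝[>] 0)
      (𝓝 (∫ x, ⟪g x, u x • T x⟫)) := by
    refine tendsto_integral_filter_of_dominated_convergence
      (fun x ↦ ‖T‖ * (u x ^ 2 + (1 + ‖x‖ ^ 2) * ‖g x‖ ^ 2)) ?_ ?_ ((hu2.add hg2).const_mul _)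
      (.of_forall fun x ↦ ?_)
    · filter_upwards [self_mem_nhdsWithin] with ε hε
      exact hgm.inner (hum.smul ((contDiff_damping (n := 0) hε).continuous.aestronglyMeasurable.smul
        hTm))
    · filter_upwards [self_mem_nhdsWithin] with ε hε
      refine .of_forall fun x ↦ abs_inner_smul_le (norm_nonneg T) ?_ _
      rw [norm_smul, Real.norm_of_nonneg (damping_pos hε x).le]
      exact (mul_le_of_le_one_left (norm_nonneg _) (damping_le_one hε x)).trans (T.le_opNorm x)
    · simpa only [one_smul] using
        tendsto_const_nhds.inner (((tendsto_damping x).smul_const (T x)).const_smul (u x))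
  rw [← integral_const_mul, ← tendsto_nhds_unique hleft ((hright.const_mul 2).neg.congr' ?_)]
  · simp only [mul_comm]
  · filter_upwards [self_mem_nhdsWithin] with ε hε
    exact (hu.integral_sq_mul_divergence_damping_smul hE hε).symm

namespace IsHardySobolevExtremal

variable {p : ℝ≥0∞} {S : ℝ} {μ : Measure E}

lemma tendsto_integral_dampedQuadraticForm (h : IsHardySobolevExtremal p S μ u g)
    (hE : 5 ≤ finrank ℝ E) (hT : T.IsSymmetric) :
    Tendsto (fun ε ↦ ∫ x, dampedQuadraticForm T ε x ∂μ) (𝓝[>] 0) (𝓝 (∫ x, ⟪T x, x⟫ ∂μ)) := by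
  refine tendsto_integral_filter_of_dominated_convergence (fun x ↦ ‖T‖ * (1 + ‖x‖ ^ 2)) ?_ ?_
    ((h.integrable_one_add_norm_sq hE).const_mul _)
    (.of_forall fun x ↦ tendsto_dampedQuadraticForm T x)
  all_goals filter_upwards [self_mem_nhdsWithin] with ε hε
  · exact (isDirichletMultiplier_dampedQuadraticForm hT hε).contDiff.continuous.aestronglyMeasurable
  · refine .of_forall fun x ↦ (abs_dampedQuadraticForm_le hε x).trans ?_
    gcongr
    linarith

lemma tendsto_integral_inner_leibnizGradient (h : IsHardySobolevExtremal p S μ u g)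
    (hE : 5 ≤ finrank ℝ E) (hT : T.IsSymmetric) :
    Tendsto (fun ε ↦ ∫ x, ⟪g x, leibnizGradient u g (dampedQuadraticForm T ε) x⟫) (𝓝[>] 0)
      (𝓝 (∫ x, (⟪T x, x⟫ * ‖g x‖ ^ 2 + 2 * ⟪g x, u x • T x⟫))) := by
  have hu2 := h.integrable_sq hE
  have hg2 := h.integrable_one_add_norm_sq_mul_norm_sq hE
  have hu := h.hasDirichletGradient
  refine tendsto_integral_filter_of_dominated_convergence
    (fun x ↦ ‖T‖ * ((1 + ‖x‖ ^ 2) * ‖g x‖ ^ 2) +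
      4 * ‖T‖ * (u x ^ 2 + (1 + ‖x‖ ^ 2) * ‖g x‖ ^ 2)) ?_ ?_
    ((hg2.const_mul _).add ((hu2.add hg2).const_mul _)) (.of_forall fun x ↦ ?_)
  · filter_upwards [self_mem_nhdsWithin] with ε hε
    exact hu.memLp.aestronglyMeasurable.inner (hu.mul (by lia)
      (isDirichletMultiplier_dampedQuadraticForm hT hε)).memLp.aestronglyMeasurable
  · filter_upwards [self_mem_nhdsWithin] with ε hε
    refine .of_forall fun x ↦ ?_
    have hquad : |dampedQuadraticForm T ε x| * ‖g x‖ ^ 2 ≤ ‖T‖ * ((1 + ‖x‖ ^ 2) * ‖g x‖ ^ 2) := by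
      rw [← mul_assoc]
      gcongr
      refine (abs_dampedQuadraticForm_le hε x).trans ?_
      gcongr
      linarith
    have hgrad : ‖∇ (dampedQuadraticForm T ε) x‖ ≤ 4 * ‖T‖ * ‖x‖ := by
      refine (norm_gradient_dampedQuadraticForm_le hT hε x).trans ?_
      gcongr
      exact mul_le_of_le_one_left (norm_nonneg x) (damping_le_one hε x)
    rw [leibnizGradient, inner_add_right, inner_smul_right, real_inner_self_eq_norm_sq]
    refine (norm_add_le _ _).trans (add_le_add ?_ (abs_inner_smul_le (by positivity) hgrad _))
    rwa [norm_mul, norm_pow, norm_norm]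
  · simp only [leibnizGradient, inner_add_right, inner_smul_right, real_inner_self_eq_norm_sq]
    have hgrad := (tendsto_const_nhds (x := g x)).inner (𝕜 := ℝ)
      (tendsto_gradient_dampedQuadraticForm hT x)
    rw [inner_smul_right] at hgrad
    convert! ((tendsto_dampedQuadraticForm T x).mul_const (‖g x‖ ^ 2)).add (hgrad.const_mul (u x))
      using 2
    ring

theorem mul_integral_inner_apply_self (h : IsHardySobolevExtremal p S μ u g)
    (hE : 5 ≤ finrank ℝ E) (hT : T.IsSymmetric) :
    S * ∫ x, ⟪T x, x⟫ ∂μ =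
      (∫ x, ⟪T x, x⟫ * ‖g x‖ ^ 2) - T.toLinearMap.trace ℝ E * ∫ x, u x ^ 2 := by
  have hu := h.hasDirichletGradient
  have hu2 := h.integrable_sq hE
  have hg2 := h.integrable_one_add_norm_sq_mul_norm_sq hE
  have euler_lagrange : S * ∫ x, ⟪T x, x⟫ ∂μ =
      ∫ x, (⟪T x, x⟫ * ‖g x‖ ^ 2 + 2 * ⟪g x, u x • T x⟫) := by
    refine tendsto_nhds_unique
      (((h.tendsto_integral_dampedQuadraticForm hE hT).const_mul S).congr' ?_)
      (h.tendsto_integral_inner_leibnizGradient hE hT)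
    filter_upwards [self_mem_nhdsWithin] with ε hε
    exact (h.integral_inner_eq (by lia) (isDirichletMultiplier_dampedQuadraticForm hT hε)).symm
  have hquad : Integrable (fun x ↦ ⟪T x, x⟫ * ‖g x‖ ^ 2) := by
    refine (hg2.const_mul ‖T‖).mono' ((T.continuous.inner continuous_id).aestronglyMeasurable.mul
      (hu.memLp.aestronglyMeasurable.norm.pow 2)) (.of_forall fun x ↦ ?_)
    rw [norm_mul, norm_pow, norm_norm, ← mul_assoc]
    gcongr
    refine (abs_inner_apply_self_le x).trans ?_
    gcongr
    linarith
  have hcross : Integrable (fun x ↦ ⟪g x, u x • T x⟫) :=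
    ((hu2.add hg2).const_mul ‖T‖).mono' (hu.memLp.aestronglyMeasurable.inner
      (hu.aestronglyMeasurable.smul T.continuous.aestronglyMeasurable))
      (.of_forall fun x ↦ abs_inner_smul_le (norm_nonneg T) (T.le_opNorm x) _)
  rw [euler_lagrange, hu.trace_mul_integral_sq (by lia) hu2 hg2, sub_neg_eq_add,
    ← integral_const_mul, integral_add hquad (hcross.const_mul 2)]

end IsHardySobolevExtremal
end Virial

section CylindricalWeight

lemma locallyIntegrable_prod_apply {ι : Type*} [Fintype ι] {f : ι → ℝ → ℝ}
    (hf : ∀ i, LocallyIntegrable (f i)) :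
    LocallyIntegrable (fun x : EuclideanSpace ℝ ι ↦ ∏ i, f i (x i)) := by
  refine locallyIntegrable_iff.2 fun K hK ↦ ?_
  obtain ⟨R, -, hR⟩ := hK.isBounded.exists_pos_norm_le
  have hcube : Integrable (fun x : EuclideanSpace ℝ ι ↦
      ∏ i, (Icc (-R) R).indicator (f i) (x i)) := by
    refine (PiLp.volume_preserving_ofLp ι).integrable_comp_of_integrable
      (g := fun y ↦ ∏ i, (Icc (-R) R).indicator (f i) (y i))
      (Integrable.fintype_prod fun i ↦ ?_)
    rw [integrable_indicator_iff measurableSet_Icc]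
    exact (hf i).integrableOn_isCompact isCompact_Icc
  refine hcube.integrableOn.congr_fun (fun x hx ↦ Finset.prod_congr rfl fun i _ ↦ ?_)
    hK.measurableSet
  have hxi : x i ∈ Icc (-R) R := abs_le.1 ((PiLp.norm_apply_le x i).trans (hR x hx))
  exact indicator_of_mem hxi (f i)

lemma locallyIntegrable_abs_rpow_neg {c : ℝ} (hc : c < 1) :
    LocallyIntegrable (fun r : ℝ ↦ |r| ^ (-c)) := by
  refine locallyIntegrable_of_norm_le_rpow (C := 1) (α := c) (by simp) (by simpa using hc)
    (.of_forall fun r ↦ ?_) (measurable_norm.pow_const _).aestronglyMeasurable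
  rw [Real.norm_of_nonneg (by positivity), one_mul, Real.norm_eq_abs]

variable {N k : ℕ}

lemma ae_apply_ne_zero (i : Fin N) : ∀ᵐ x : Euc N, x i ≠ 0 := by
  refine measure_mono_null (fun x hx ↦ ?_) (Measure.addHaar_submodule volume
    (EuclideanSpace.proj i : Euc N →L[ℝ] ℝ).ker fun h ↦ ?_)
  · simpa using hx
  · simpa using (Submodule.eq_top_iff'.1 h) (EuclideanSpace.single i 1)

lemma measurable_zNorm : Measurable (zNorm N k) := by
  refine Measurable.sqrt (Finset.measurable_sum _ fun i _ ↦ ?_)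
  split_ifs <;> fun_prop

lemma zNorm_nonneg (x : Euc N) : 0 ≤ zNorm N k x := Real.sqrt_nonneg _

lemma abs_apply_le_zNorm {i : Fin N} (hi : k ≤ i) (x : Euc N) : |x i| ≤ zNorm N k x := by
  refine Real.abs_le_sqrt ((if_pos hi).symm.trans_le
    (Finset.single_le_sum (f := fun i : Fin N ↦ if k ≤ (i : ℕ) then x i ^ 2 else 0)
      (fun j _ ↦ ?_) (Finset.mem_univ i)))
  split_ifs <;> positivity

lemma ae_zNorm_pos (hk : k < N) : ∀ᵐ x : Euc N, 0 < zNorm N k x := by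
  filter_upwards [ae_apply_ne_zero (⟨k, hk⟩ : Fin N)] with x hx
  exact (abs_pos.2 hx).trans_le (abs_apply_le_zNorm (i := ⟨k, hk⟩) le_rfl x)

lemma zNorm_rpow_neg_le_prod (hk : k < N) {σ : ℝ} (hσ : 0 ≤ σ) {x : Euc N}
    (hx : ∀ i, x i ≠ 0) :
    zNorm N k x ^ (-σ) ≤ ∏ i : Fin N, |x i| ^ (-if k ≤ (i : ℕ) then σ / (N - k) else 0) := by
  have hNk : (0 : ℝ) < N - k := sub_pos.2 (by exact_mod_cast hk)
  have hz : 0 < zNorm N k x :=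
    (abs_pos.2 (hx ⟨k, hk⟩)).trans_le (abs_apply_le_zNorm (i := ⟨k, hk⟩) le_rfl x)
  have hcard : (Finset.univ.filter fun i : Fin N ↦ k ≤ (i : ℕ)).card = N - k := by
    have hsplit := Finset.univ.card_filter_add_card_filter_not fun i : Fin N ↦ (i : ℕ) < k
    simp only [Fin.card_filter_val_lt, not_lt, Finset.card_univ, Fintype.card_fin] at hsplit
    lia
  have hsum : ∑ i : Fin N, (if k ≤ (i : ℕ) then σ / (N - k) else 0) = σ := by
    rw [← Finset.sum_filter, Finset.sum_const, hcard, nsmul_eq_mul, Nat.cast_sub hk.le,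
      mul_div_cancel₀ _ hNk.ne']
  calc zNorm N k x ^ (-σ)
      = ∏ i : Fin N, zNorm N k x ^ (-if k ≤ (i : ℕ) then σ / (N - k) else 0) := by
        rw [← Real.rpow_sum_of_pos hz, Finset.sum_neg_distrib, hsum]
    _ ≤ _ := by
        refine Finset.prod_le_prod (fun i _ ↦ Real.rpow_nonneg (zNorm_nonneg x) _) fun i _ ↦ ?_
        split_ifs with hi
        · exact Real.rpow_le_rpow_of_nonpos (abs_pos.2 (hx i)) (abs_apply_le_zNorm hi x)
            (neg_nonpos.2 (div_nonneg hσ hNk.le))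
        · simp

lemma locallyIntegrable_zNorm_rpow_neg (hk : k < N) {σ : ℝ} (hσ : 0 ≤ σ) (hσk : σ < N - k) :
    LocallyIntegrable (fun x : Euc N ↦ zNorm N k x ^ (-σ)) := by
  have hNk : (0 : ℝ) < N - k := hσ.trans_lt hσk
  have hprod : LocallyIntegrable fun x : Euc N ↦
      ∏ i : Fin N, |x i| ^ (-if k ≤ (i : ℕ) then σ / (N - k) else 0) := by
    refine locallyIntegrable_prod_apply fun i ↦ locallyIntegrable_abs_rpow_neg ?_
    split_ifs
    · rwa [div_lt_one hNk]
    · exact one_pos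
  refine hprod.mono (measurable_zNorm.pow_const _).aestronglyMeasurable ?_
  filter_upwards [ae_all_iff.2 ae_apply_ne_zero] with x hx
  rw [Real.norm_of_nonneg (Real.rpow_nonneg (zNorm_nonneg x) _)]
  exact (zNorm_rpow_neg_le_prod hk hσ hx).trans (le_abs_self _)

lemma integrable_zNorm_rpow_neg_mul (hk : k < N) {σ p : ℝ} (hσ : 0 ≤ σ)
    (hσk : σ < N - k) (hp : 0 < p) {φ : Euc N → ℝ} (hφ : Continuous φ)
    (hφc : HasCompactSupport φ) : Integrable (fun x ↦ zNorm N k x ^ (-σ) * |φ x| ^ p) :=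
  (locallyIntegrable_zNorm_rpow_neg hk hσ hσk).integrable_smul_right_of_hasCompactSupport
    (hφ.abs.rpow_const fun _ ↦ .inr hp.le) (hφc.comp_left (g := fun s : ℝ ↦ |s| ^ p)
      (by simp [Real.zero_rpow hp.ne']))

end CylindricalWeight

section HardySobolev

lemma eLpNorm_withDensity_enorm_rpow {α F : Type*} [MeasurableSpace α] [NormedAddCommGroup F]
    [NormedSpace ℝ F] {μ : Measure α} {p : ℝ≥0∞} (hp : p ≠ 0) (hp' : p ≠ ⊤) {f : α → F}
    (hf : AEStronglyMeasurable f μ) (η : α → ℝ) :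
    eLpNorm η p (μ.withDensity fun x ↦ ‖f x‖ₑ ^ p.toReal) = eLpNorm (fun x ↦ η x • f x) p μ := by
  rw [eLpNorm_eq_lintegral_rpow_enorm_toReal hp hp', eLpNorm_eq_lintegral_rpow_enorm_toReal hp hp',
    lintegral_withDensity_eq_lintegral_mul_non_measurable₀ _ (hf.enorm.pow_const _)
      (.of_forall fun x ↦ ENNReal.rpow_lt_top_of_nonneg ENNReal.toReal_nonneg enorm_ne_top)]
  simp only [Pi.mul_apply, enorm_smul, ENNReal.mul_rpow_of_nonneg _ _ ENNReal.toReal_nonneg,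
    mul_comm]

variable {N k : ℕ} {σ : ℝ}

lemma two_lt_twoStar (hN : 2 < N) (hσ : σ < 2) : 2 < twoStar N σ := by
  have hN' : (2 : ℝ) < N := by exact_mod_cast hN
  rw [twoStar, lt_div_iff₀ (by linarith)]
  linarith

lemma enorm_smul_zNorm_rpow {p : ℝ} (hp : 0 < p) (s : ℝ) (x : Euc N) :
    ‖s • zNorm N k x ^ (-σ / p)‖ₑ ^ p = ENNReal.ofReal (zNorm N k x ^ (-σ) * |s| ^ p) := by
  have hz := zNorm_nonneg (k := k) x
  rw [← ofReal_norm, ENNReal.ofReal_rpow_of_nonneg (norm_nonneg _) hp.le, norm_smul,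
    Real.norm_of_nonneg (Real.rpow_nonneg hz _), Real.mul_rpow (norm_nonneg _)
      (Real.rpow_nonneg hz _), ← Real.rpow_mul hz, div_mul_cancel₀ _ hp.ne', mul_comm,
    Real.norm_eq_abs]

lemma eLpNorm_smul_zNorm_rpow (hp : 0 < twoStar N σ) {v : Euc N → ℝ}
    (hv : Integrable fun x ↦ zNorm N k x ^ (-σ) * |v x| ^ twoStar N σ) :
    eLpNorm (fun x ↦ v x • zNorm N k x ^ (-σ / twoStar N σ)) (ENNReal.ofReal (twoStar N σ)) =
      ENNReal.ofReal (hsInt N k σ v ^ (1 / twoStar N σ)) := by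
  have hnonneg (x) : 0 ≤ zNorm N k x ^ (-σ) * |v x| ^ twoStar N σ :=
    mul_nonneg (Real.rpow_nonneg (zNorm_nonneg x) _) (Real.rpow_nonneg (abs_nonneg _) _)
  rw [eLpNorm_eq_lintegral_rpow_enorm_toReal (by simpa using hp) ENNReal.ofReal_ne_top,
    ENNReal.toReal_ofReal hp.le]
  simp only [enorm_smul_zNorm_rpow hp]
  rw [← ofReal_integral_eq_lintegral_ofReal hv (.of_forall hnonneg),
    ENNReal.ofReal_rpow_of_nonneg (integral_nonneg hnonneg) (one_div_pos.2 hp).le]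
  rfl

lemma hsInt_nonneg (v : Euc N → ℝ) : 0 ≤ hsInt N k σ v :=
  integral_nonneg fun x ↦
    mul_nonneg (Real.rpow_nonneg (zNorm_nonneg x) _) (Real.rpow_nonneg (abs_nonneg _) _)

lemma hsInt_const_smul (c : ℝ) (v : Euc N → ℝ) :
    hsInt N k σ (c • v) = |c| ^ twoStar N σ * hsInt N k σ v := by
  simp only [hsInt, Pi.smul_apply, smul_eq_mul, abs_mul,
    Real.mul_rpow (abs_nonneg _) (abs_nonneg _), ← integral_const_mul]
  exact integral_congr_ae (.of_forall fun x ↦ mul_left_comm _ _ _)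

lemma gradL2_const_smul (c : ℝ) (v : Euc N → ℝ) : gradL2 N (c • v) = c ^ 2 * gradL2 N v := by
  simp only [gradL2, fderiv_const_smul_field, Pi.smul_apply, norm_smul, mul_pow, Real.norm_eq_abs,
    sq_abs, integral_const_mul]

lemma gradL2_nonneg (v : Euc N → ℝ) : 0 ≤ gradL2 N v := integral_nonneg fun _ ↦ sq_nonneg _

lemma gradL2_eq_integral_norm_gradient_sq (v : Euc N → ℝ) :
    gradL2 N v = ∫ x, ‖∇ v x‖ ^ 2 := by
  simp only [gradL2, norm_gradient]

lemma Sconst_nonneg : 0 ≤ Sconst N k σ := by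
  refine Real.sInf_nonneg ?_
  rintro _ ⟨v, -, -, rfl⟩
  exact gradL2_nonneg v

lemma Sconst_le_gradL2 {v : Euc N → ℝ} (hv : MemD12 N v) (hv1 : hsInt N k σ v = 1) :
    Sconst N k σ ≤ gradL2 N v := by
  refine csInf_le ⟨0, ?_⟩ ⟨v, hv, hv1, rfl⟩
  rintro _ ⟨v, -, -, rfl⟩
  exact gradL2_nonneg v

lemma IsTestFunction.memD12 {φ : Euc N → ℝ} (hφ : IsTestFunction φ) : MemD12 N φ :=
  ⟨fun _ ↦ φ, fun _ ↦ ⟨hφ.contDiff, hφ.hasCompactSupport⟩, by simp, by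
    simp only [sub_self]
    exact tendsto_const_nhds.congr fun _ ↦ (eLpNorm_zero (ε := Euc N →L[ℝ] ℝ)).symm⟩

lemma IsTestFunction.const_smul {φ : Euc N → ℝ} (hφ : IsTestFunction φ) (c : ℝ) :
    IsTestFunction (c • φ) :=
  ⟨hφ.contDiff.const_smul c, hφ.hasCompactSupport.smul_left⟩

lemma IsTestFunction.Sconst_mul_hsInt_rpow_le (hp : 0 < twoStar N σ) {φ : Euc N → ℝ}
    (hφ : IsTestFunction φ) :
    Sconst N k σ * (hsInt N k σ φ ^ (1 / twoStar N σ)) ^ 2 ≤ gradL2 N φ := by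
  set A := hsInt N k σ φ ^ (1 / twoStar N σ) with hA
  have hA0 : 0 ≤ A := Real.rpow_nonneg (hsInt_nonneg φ) _
  rcases hA0.eq_or_lt with hA0 | hA0
  · simpa only [← hA0, zero_pow two_ne_zero, mul_zero] using gradL2_nonneg φ
  have hnormalized : hsInt N k σ (A⁻¹ • φ) = 1 := by
    rw [hsInt_const_smul, abs_of_pos (inv_pos.2 hA0), Real.inv_rpow hA0.le, hA,
      ← Real.rpow_mul (hsInt_nonneg φ), one_div_mul_cancel hp.ne', Real.rpow_one]
    refine inv_mul_cancel₀ fun h0 ↦ hA0.ne' ?_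
    rw [hA, h0, Real.zero_rpow (one_div_pos.2 hp).ne']
  have hle := Sconst_le_gradL2 (hφ.const_smul A⁻¹).memD12 hnormalized
  rwa [gradL2_const_smul, inv_pow, inv_mul_eq_div, le_div_iff₀ (by positivity)] at hle

lemma HasDirichletGradient.sqrt_Sconst_mul_eLpNorm_le (hk : k < N) (hσ : 0 ≤ σ) (hσk : σ < N - k)
    (hp : 0 < twoStar N σ) {u : Euc N → ℝ} {g : Euc N → Euc N} (hu : HasDirichletGradient u g) :
    ENNReal.ofReal √(Sconst N k σ) * eLpNorm (fun x ↦ u x • zNorm N k x ^ (-σ / twoStar N σ))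
      (ENNReal.ofReal (twoStar N σ)) ≤ eLpNorm g 2 := by
  have hscale (v : Euc N → ℝ) :
      eLpNorm (fun x ↦ v x • √(Sconst N k σ) • zNorm N k x ^ (-σ / twoStar N σ))
        (ENNReal.ofReal (twoStar N σ)) = ENNReal.ofReal √(Sconst N k σ) *
      eLpNorm (fun x ↦ v x • zNorm N k x ^ (-σ / twoStar N σ))
        (ENNReal.ofReal (twoStar N σ)) := by
    simp only [smul_comm (v _)]
    rw [← Real.enorm_of_nonneg (Real.sqrt_nonneg _)]
    exact eLpNorm_const_smul √(Sconst N k σ)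
      (fun x ↦ v x • zNorm N k x ^ (-σ / twoStar N σ)) _ volume
  have hmeas : AEStronglyMeasurable fun x : Euc N ↦
      √(Sconst N k σ) • zNorm N k x ^ (-σ / twoStar N σ) :=
    ((measurable_zNorm.pow_const _).const_mul _).aestronglyMeasurable
  rw [← hscale, ← one_mul (eLpNorm g 2 volume)]
  refine hu.eLpNorm_smul_le_of_forall_isTestFunction hmeas ENNReal.one_ne_top fun φ hφ ↦ ?_
  rw [hscale, one_mul, eLpNorm_smul_zNorm_rpow hp (integrable_zNorm_rpow_neg_mul hk hσ hσk hp
    hφ.contDiff.continuous hφ.hasCompactSupport), eLpNorm_two_eq_ofReal_sqrt hφ.memLp_gradient,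
    ← ENNReal.ofReal_mul (Real.sqrt_nonneg _)]
  refine ENNReal.ofReal_le_ofReal (Real.le_sqrt_of_sq_le ?_)
  rw [mul_pow, Real.sq_sqrt Sconst_nonneg, ← gradL2_eq_integral_norm_gradient_sq]
  exact hφ.Sconst_mul_hsInt_rpow_le hp

end HardySobolev

section GroundState

variable {N k : ℕ} {σ : ℝ} {w : Euc N → ℝ}

/-- The measure with density `|z|^{-σ} |w|^{2*_σ}`; it is a probability measure when `w` is a ground
state. -/
def hardySobolevMeasure (N k : ℕ) (σ : ℝ) (w : Euc N → ℝ) : Measure (Euc N) :=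
  volume.withDensity fun x ↦ ENNReal.ofReal (zNorm N k x ^ (-σ) * |w x| ^ twoStar N σ)

lemma zNorm_rpow_mul_nonneg (w : Euc N → ℝ) (x : Euc N) :
    0 ≤ zNorm N k x ^ (-σ) * |w x| ^ twoStar N σ :=
  mul_nonneg (Real.rpow_nonneg (zNorm_nonneg x) _) (Real.rpow_nonneg (abs_nonneg _) _)

namespace GroundState

lemma integrable (hw : GroundState N k σ w) :
    Integrable fun x ↦ zNorm N k x ^ (-σ) * |w x| ^ twoStar N σ :=
  .of_integral_ne_zero (hw.2.2.1.trans_ne one_ne_zero)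

lemma integral_hardySobolevMeasure (hw : GroundState N k σ w) (f : Euc N → ℝ) :
    ∫ x, f x ∂hardySobolevMeasure N k σ w =
      ∫ x, (zNorm N k x ^ (-σ) * |w x| ^ twoStar N σ) * f x := by
  rw [hardySobolevMeasure, integral_withDensity_eq_integral_toReal_smul₀
    hw.integrable.1.aemeasurable.ennreal_ofReal (.of_forall fun _ ↦ ENNReal.ofReal_lt_top)]
  simp only [ENNReal.toReal_ofReal (zNorm_rpow_mul_nonneg w _), smul_eq_mul]

lemma integrable_hardySobolevMeasure_iff (hw : GroundState N k σ w) (f : Euc N → ℝ) :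
    Integrable f (hardySobolevMeasure N k σ w) ↔
      Integrable fun x ↦ (zNorm N k x ^ (-σ) * |w x| ^ twoStar N σ) * f x := by
  rw [hardySobolevMeasure, integrable_withDensity_iff_integrable_smul₀'
    hw.integrable.1.aemeasurable.ennreal_ofReal (.of_forall fun _ ↦ ENNReal.ofReal_lt_top)]
  simp only [ENNReal.toReal_ofReal (zNorm_rpow_mul_nonneg w _), smul_eq_mul]

lemma isProbabilityMeasure (hw : GroundState N k σ w) :
    IsProbabilityMeasure (hardySobolevMeasure N k σ w) := by
  constructor
  rw [hardySobolevMeasure, withDensity_apply _ .univ, Measure.restrict_univ,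
    ← ofReal_integral_eq_lintegral_ofReal hw.integrable (.of_forall (zNorm_rpow_mul_nonneg w))]
  exact (congrArg _ hw.2.2.1).trans ENNReal.ofReal_one

lemma aestronglyMeasurable (hw : GroundState N k σ w) (hk : k < N) (hp : 0 < twoStar N σ) :
    AEStronglyMeasurable w := by
  have hmeas : AEMeasurable fun x ↦
      (zNorm N k x ^ (-σ) * |w x| ^ twoStar N σ / zNorm N k x ^ (-σ)) ^ (1 / twoStar N σ) :=
    (hw.integrable.1.aemeasurable.div (measurable_zNorm.pow_const _).aemeasurable).pow_const _
  refine (hmeas.congr ?_).aestronglyMeasurable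
  filter_upwards [ae_zNorm_pos hk] with x hx
  rw [mul_div_cancel_left₀ _ (Real.rpow_pos_of_pos hx _).ne', ← Real.rpow_mul (abs_nonneg _),
    mul_one_div_cancel hp.ne', Real.rpow_one, abs_of_pos (hw.2.1 x)]

lemma hasDirichletGradient (hw : GroundState N k σ w) (hN : 2 < N) (hk : k < N)
    (hp : 0 < twoStar N σ) : HasDirichletGradient w (∇ w) := by
  obtain ⟨φ, hφ, hφw, hφg⟩ := hw.1
  have hexponent : ENNReal.ofReal (2 * (N : ℝ) / ((N : ℝ) - 2)) ≠ 0 := by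
    have hN' : (2 : ℝ) < N := by exact_mod_cast hN
    exact (ENNReal.ofReal_pos.2 (div_pos (by linarith) (sub_pos.2 hN'))).ne'
  have hφ' (n) : IsTestFunction (φ n) := ⟨(hφ n).1, (hφ n).2⟩
  have hgradient : Tendsto (fun n ↦ eLpNorm (∇ (φ n) - ∇ w) 2) atTop (𝓝 0) := by
    refine hφg.congr fun n ↦ eLpNorm_congr_norm_ae (.of_forall fun x ↦ ?_)
    rw [Pi.sub_apply, gradient, gradient, ← map_sub, LinearIsometryEquiv.norm_map, norm_sub_rev]
  have hgm : AEStronglyMeasurable (∇ w) :=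
    ((InnerProductSpace.toDual ℝ (Euc N)).symm.continuous.measurable.comp
      (measurable_fderiv ℝ w)).aestronglyMeasurable
  have hinMeasure : TendstoInMeasure volume φ atTop w := by
    refine tendstoInMeasure_of_tendsto_eLpNorm hexponent
      (fun n ↦ (hφ n).1.continuous.aestronglyMeasurable) (hw.aestronglyMeasurable hk hp) ?_
    exact hφw.congr fun n ↦ eLpNorm_sub_comm w (φ n) _ _
  obtain ⟨n, hn⟩ := (hgradient.eventually_lt_const (u := 1) one_pos).exists
  have hdiff : MemLp (∇ (φ n) - ∇ w) 2 :=
    ⟨((hφ' n).memLp_gradient (p := 2)).1.sub hgm, hn.trans ENNReal.one_lt_top⟩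
  obtain ⟨ns, hns, hae⟩ := hinMeasure.exists_seq_tendsto_ae
  refine ⟨?_, fun n ↦ φ (ns n), fun n ↦ hφ' (ns n), hae, hgradient.comp hns.tendsto_atTop⟩
  simpa only [sub_sub_cancel] using (hφ' n).memLp_gradient.sub hdiff

lemma integral_norm_gradient_sq (hw : GroundState N k σ w) :
    ∫ x, ‖∇ w x‖ ^ 2 = Sconst N k σ := by
  rw [← gradL2_eq_integral_norm_gradient_sq, hw.2.2.2]

lemma Sconst_pos (hw : GroundState N k σ w) (hN : 2 < N) (hk : k < N)
    (hp : 0 < twoStar N σ) : 0 < Sconst N k σ := by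
  have hE : 2 < finrank ℝ (Euc N) := by rwa [finrank_euclideanSpace_fin]
  have hgradient := hw.hasDirichletGradient hN hk hp
  have hpos (x) : 0 < w x ^ 2 * hardyWeight x ^ 2 :=
    mul_pos (pow_pos (hw.2.1 x) 2) (pow_pos (hardyWeight_pos x) 2)
  have hsupport : Function.support (fun x ↦ w x ^ 2 * hardyWeight x ^ 2) = univ :=
    eq_univ_of_forall fun x ↦ (hpos x).ne'
  have hweighted : 0 < ∫ x, w x ^ 2 * hardyWeight x ^ 2 := by
    rw [integral_pos_iff_support_of_nonneg (fun x ↦ (hpos x).le)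
      (hgradient.integrable_sq_mul_hardyWeight_sq hE), hsupport]
    exact Measure.measure_univ_pos.2 (NeZero.ne _)
  have hardy := hgradient.integral_sq_mul_hardyWeight_sq_le hE
  rw [hw.integral_norm_gradient_sq] at hardy
  exact pos_of_mul_pos_right (hweighted.trans_le hardy) (sq_nonneg _)

theorem isHardySobolevExtremal (hw : GroundState N k σ w) (hN : 2 < N) (hk : k < N)
    (hσ : σ ∈ Ico 0 2) (hσk : σ < N - k) :
    IsHardySobolevExtremal (ENNReal.ofReal (twoStar N σ)) (Sconst N k σ)
      (hardySobolevMeasure N k σ w) w (∇ w) := by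
  have hE : 2 < finrank ℝ (Euc N) := by rwa [finrank_euclideanSpace_fin]
  have htwo := two_lt_twoStar hN hσ.2
  have hp : 0 < twoStar N σ := two_pos.trans htwo
  have hgradient := hw.hasDirichletGradient hN hk hp
  refine ⟨by simpa using htwo, ENNReal.ofReal_ne_top, hw.Sconst_pos hN hk hp,
    hw.isProbabilityMeasure, hgradient, hw.integral_norm_gradient_sq, fun η hη ↦ ?_⟩
  have hμ : hardySobolevMeasure N k σ w = volume.withDensity fun x ↦
      ‖w x • zNorm N k x ^ (-σ / twoStar N σ)‖ₑ ^ (ENNReal.ofReal (twoStar N σ)).toReal := by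
    simp only [ENNReal.toReal_ofReal hp.le, enorm_smul_zNorm_rpow hp]
    rfl
  have hmeas : AEStronglyMeasurable fun x ↦ w x • zNorm N k x ^ (-σ / twoStar N σ) :=
    (hw.aestronglyMeasurable hk hp).smul (measurable_zNorm.pow_const _).aestronglyMeasurable
  rw [hμ, eLpNorm_withDensity_enorm_rpow (by simpa using hp) ENNReal.ofReal_ne_top hmeas]
  simpa only [Pi.mul_apply, mul_smul] using
    (hgradient.mul hE hη).sqrt_Sconst_mul_eLpNorm_le hk hσ.1 hσk hp

end GroundState

end GroundState

section HeadProjection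

variable {N k : ℕ}

/-- The orthogonal projection `(t, z) ↦ (t, 0)` onto the first `k` coordinates. -/
def headProjection (N k : ℕ) : Euc N →L[ℝ] Euc N :=
  Matrix.toEuclideanCLM (𝕜 := ℝ) (Matrix.diagonal fun i : Fin N ↦ if (i : ℕ) < k then 1 else 0)

lemma headProjection_apply (x : Euc N) (i : Fin N) :
    headProjection N k x i = if (i : ℕ) < k then x i else 0 := by
  simp only [headProjection, Matrix.ofLp_toEuclideanCLM, Matrix.mulVec_diagonal, ite_mul, one_mul,
    zero_mul]

lemma isSymmetric_headProjection : (headProjection N k).IsSymmetric :=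
  Matrix.isSymmetric_toEuclideanLin_iff.2 (Matrix.isHermitian_diagonal _)

lemma inner_headProjection_self (x : Euc N) : ⟪headProjection N k x, x⟫ = tNorm N k x ^ 2 := by
  have hnonneg : 0 ≤ ∑ i : Fin N, if (i : ℕ) < k then x i ^ 2 else 0 :=
    Finset.sum_nonneg fun i _ ↦ by split_ifs <;> positivity
  rw [tNorm, Real.sq_sqrt hnonneg, PiLp.inner_apply]
  refine Finset.sum_congr rfl fun i _ ↦ ?_
  rw [headProjection_apply]
  split_ifs
  · simp [sq]
  · simp

lemma continuous_tNorm_sq : Continuous fun x ↦ tNorm N k x ^ 2 := by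
  simp only [← inner_headProjection_self]
  fun_prop

lemma tNorm_sq_le_norm_sq (x : Euc N) : tNorm N k x ^ 2 ≤ ‖x‖ ^ 2 := by
  rw [← inner_headProjection_self, EuclideanSpace.real_norm_sq_eq, PiLp.inner_apply]
  refine Finset.sum_le_sum fun i _ ↦ ?_
  rw [headProjection_apply]
  split_ifs
  · simp [sq]
  · simpa using sq_nonneg (x i)

lemma integrable_tNorm_sq_mul {μ : Measure (Euc N)} {f : Euc N → ℝ}
    (hf : AEStronglyMeasurable f μ) (hint : Integrable (fun x ↦ (1 + ‖x‖ ^ 2) * f x) μ) :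
    Integrable (fun x ↦ tNorm N k x ^ 2 * f x) μ := by
  refine hint.mono (continuous_tNorm_sq.aestronglyMeasurable.mul hf) (.of_forall fun x ↦ ?_)
  have hle : tNorm N k x ^ 2 ≤ 1 + ‖x‖ ^ 2 := by linarith [tNorm_sq_le_norm_sq (k := k) x]
  rw [norm_mul, norm_mul, Real.norm_of_nonneg (sq_nonneg _)]
  gcongr
  exact hle.trans (le_abs_self _)

lemma trace_headProjection (hk : k ≤ N) :
    (headProjection N k).toLinearMap.trace ℝ (Euc N) = k := by
  rw [LinearMap.trace_eq_sum_inner _ (EuclideanSpace.basisFun (Fin N) ℝ)]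
  simp [EuclideanSpace.inner_single_left, headProjection_apply, Fin.card_filter_val_lt, hk]

end HeadProjection

theorem statement15_general (N k : ℕ) (σ : ℝ) (hN : 5 ≤ N) (hσ : σ ∈ Set.Ico (0 : ℝ) 2)
    (hσk : σ < (N : ℝ) - k) (w : Euc N → ℝ) (hw : GroundState N k σ w) :
    Integrable (fun x => tNorm N k x ^ 2 * ‖fderiv ℝ w x‖ ^ 2) ∧
    Integrable (fun x => w x ^ 2) ∧
    Integrable (fun x => tNorm N k x ^ 2 * zNorm N k x ^ (-σ) * w x ^ twoStar N σ) ∧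
    Sconst N k σ * ∫ x, tNorm N k x ^ 2 * zNorm N k x ^ (-σ) * w x ^ twoStar N σ =
      (∫ x, tNorm N k x ^ 2 * ‖fderiv ℝ w x‖ ^ 2) - (k : ℝ) * ∫ x, w x ^ 2 := by
  have hkN : k < N := by exact_mod_cast sub_pos.1 (hσ.1.trans_lt hσk)
  have hE : 5 ≤ finrank ℝ (Euc N) := by rwa [finrank_euclideanSpace_fin]
  have hext := hw.isHardySobolevExtremal (by lia) hkN hσ hσk
  have hdensity (x) : (zNorm N k x ^ (-σ) * |w x| ^ twoStar N σ) * tNorm N k x ^ 2 =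
      tNorm N k x ^ 2 * zNorm N k x ^ (-σ) * w x ^ twoStar N σ := by
    rw [abs_of_pos (hw.2.1 x)]
    ring
  refine ⟨?_, hext.integrable_sq hE, ?_, ?_⟩
  · refine integrable_tNorm_sq_mul
      ((measurable_fderiv ℝ w).norm.pow_const 2).aestronglyMeasurable ?_
    simpa only [norm_gradient] using hext.integrable_one_add_norm_sq_mul_norm_sq hE
  · have hmoment : Integrable (fun x ↦ tNorm N k x ^ 2) (hardySobolevMeasure N k σ w) := by
      simpa only [mul_one] using integrable_tNorm_sq_mul (f := fun _ ↦ 1)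
        aestronglyMeasurable_const
        (by simpa only [mul_one] using hext.integrable_one_add_norm_sq hE)
    simpa only [hdensity] using (hw.integrable_hardySobolevMeasure_iff _).1 hmoment
  · simpa only [inner_headProjection_self, norm_gradient, trace_headProjection hkN.le,
      hw.integral_hardySobolevMeasure, hdensity] using
      hext.mul_integral_inner_apply_self hE (isSymmetric_headProjection (k := k))

end

/-- Pohozaev-type identity in the `t`-variable: for `N ≥ 5`,
`1 ≤ k ≤ N-2`, `σ ∈ (0,2)` and a positive ground state `w` for `S_{N,σ}`, the integrals
`∫ |t|²|∇w|²`, `∫ w²`, `∫ |t|²|z|^{-σ} w^{2*_σ}` are finite and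
`S_{N,σ} ∫ |t|²|z|^{-σ} w^{2*_σ} = ∫ |t|²|∇w|² − k ∫ w²`. -/
theorem statement15 (N k : ℕ) (σ : ℝ) (hN : 5 ≤ N) (hk1 : 1 ≤ k) (hk2 : k ≤ N - 2)
    (hσ : σ ∈ Set.Ioo (0 : ℝ) 2) (w : Euc N → ℝ) (hw : GroundState N k σ w) :
    Integrable (fun x => tNorm N k x ^ 2 * ‖fderiv ℝ w x‖ ^ 2) ∧
    Integrable (fun x => w x ^ 2) ∧
    Integrable (fun x => tNorm N k x ^ 2 * zNorm N k x ^ (-σ) * w x ^ twoStar N σ) ∧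
    Sconst N k σ * ∫ x, tNorm N k x ^ 2 * zNorm N k x ^ (-σ) * w x ^ twoStar N σ =
      (∫ x, tNorm N k x ^ 2 * ‖fderiv ℝ w x‖ ^ 2) - (k : ℝ) * ∫ x, w x ^ 2 := by
  have hkN : (k : ℝ) + 2 ≤ N := by exact_mod_cast (by lia : k + 2 ≤ N)
  exact statement15_general N k σ hN ⟨hσ.1.le, hσ.2⟩ (by linarith [hσ.2]) w hw
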